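/- arXiv:1611.04344 — 2 statements merged into one kernel-verified Lean document; each statement's English description precedes it below -/
import Mathlib

section
/- For every natural number m ≥ 1 there exists a C^∞ map f from the m-fold product S⁴ × S⁴ × ⋯ × S⁴ of 4-spheres to the 3-sphere S³ whose set of critical points is finite and has cardinality at most 2^m. (This is the upper bound φ(S⁴ × ⋯ × S⁴, S³) ≤ 2^m.) -/
open Function Manifold Metric Module Set

instance : Fact (finrank ℝ (EuclideanSpace ℝ (Fin 5)) = 4 + 1) :=
  ⟨finrank_euclideanSpace_fin⟩

instance : Fact (finrank ℝ (EuclideanSpace ℝ (Fin 4)) = 3 + 1) :=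
  ⟨finrank_euclideanSpace_fin⟩

namespace SphereCrit

section PiManifold

variable {ι : Type} [Fintype ι] {E H : ι → Type} [∀ i, NormedAddCommGroup (E i)]
  [∀ i, NormedSpace ℝ (E i)] [∀ i, TopologicalSpace (H i)]
  {I : ∀ i, ModelWithCorners ℝ (E i) (H i)}
  {M : ι → Type} [∀ i, TopologicalSpace (M i)] [∀ i, ChartedSpace (H i) (M i)]
  {n : WithTop ℕ∞}

/-- Coordinate projections from a finite product manifold are smooth. -/
theorem contMDiff_proj (i : ι) :
    ContMDiff (ModelWithCorners.pi I) (I i) n (fun x : ∀ i, M i => x i) := by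
  intro x
  rw [ContMDiffAt, contMDiffWithinAt_iff']
  refine ⟨(continuous_apply i).continuousWithinAt, ?_⟩
  refine ((ContinuousLinearMap.proj (R := ℝ) (φ := E) i).contDiff.contDiffWithinAt).congr
    (fun y hy => ?_) ?_
  · have h1 := hy.1
    have h2 : y i ∈ (extChartAt (I i) (x i)).target := by
      refine ⟨?_, ?_⟩
      · exact h1.1 i (mem_univ i)
      · exact h1.2 i (mem_univ i)
    exact (extChartAt (I i) (x i)).right_inv h2
  · exact (extChartAt (I i) (x i)).right_inv <|
      (extChartAt (I i) (x i)).map_source (mem_extChartAt_source _)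

/-- A map into a finite product manifold is smooth if its coordinates are. -/
theorem contMDiff_piMk {E' H' : Type} [NormedAddCommGroup E'] [NormedSpace ℝ E']
    [TopologicalSpace H'] {J : ModelWithCorners ℝ E' H'} {N : Type} [TopologicalSpace N]
    [ChartedSpace H' N] {g : N → ∀ i, M i} (hg : ∀ i, ContMDiff J (I i) n (fun y => g y i)) :
    ContMDiff J (ModelWithCorners.pi I) n g := by
  intro x
  rw [contMDiffAt_iff]
  refine ⟨(continuous_pi fun i => (hg i).continuous).continuousAt, ?_⟩
  rw [contDiffWithinAt_pi]
  intro i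
  exact (contMDiffAt_iff.1 (hg i x)).2

end PiManifold

abbrev R4 := EuclideanSpace ℝ (Fin 4)
abbrev R5 := EuclideanSpace ℝ (Fin 5)
abbrev S3 : Type := sphere (0 : R4) 1
abbrev S4 : Type := sphere (0 : R5) 1

/-- The linear isometry between quaternions and `ℝ⁴`. -/
noncomputable def e : Quaternion ℝ ≃ₗᵢ[ℝ] R4 := Quaternion.linearIsometryEquivTuple

/-- Quaternion multiplication on `ℝ⁴`. -/
noncomputable def qmul (a b : R4) : R4 := e (e.symm a * e.symm b)

theorem norm_qmul (a b : R4) : ‖qmul a b‖ = ‖a‖ * ‖b‖ := by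
  simp [qmul]

theorem contDiff_qmul : ContDiff ℝ (⊤ : ℕ∞) (fun p : R4 × R4 => qmul p.1 p.2) := by
  unfold qmul
  have e1 := e.contDiff (n := ((⊤ : ℕ∞) : WithTop ℕ∞))
  have e2 := e.symm.contDiff (n := ((⊤ : ℕ∞) : WithTop ℕ∞))
  exact e1.comp ((e2.comp contDiff_fst).mul (e2.comp contDiff_snd))

/-- The smooth multiplication on `S³`. -/
theorem exists_mul : ∃ μ : S3 × S3 → S3,
    ContMDiff ((𝓡 3).prod (𝓡 3)) (𝓡 3) (⊤ : ℕ∞) μ ∧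
    (∀ a, ∃ a', ∀ b, μ (a, μ (a', b)) = b) ∧ (∀ b, ∃ b', ∀ a, μ (μ (a, b'), b) = a) := by
  have hmem : ∀ p : S3 × S3, qmul p.1 p.2 ∈ sphere (0 : R4) 1 := by
    intro p
    simp [norm_qmul]
  have hstar : ∀ a : S3, e (star (e.symm a)) ∈ sphere (0 : R4) 1 := by
    intro a; simp
  have hn : ∀ a : S3, Quaternion.normSq (e.symm a) = 1 := by
    intro a
    rw [Quaternion.normSq_eq_norm_mul_self]; simp
  refine ⟨Set.codRestrict (fun p : S3 × S3 => qmul p.1 p.2) _ hmem, ?_, ?_, ?_⟩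
  · have h1 : ContMDiff ((𝓡 3).prod (𝓡 3)) 𝓘(ℝ, R4 × R4) (⊤ : ℕ∞)
        (fun p : S3 × S3 => ((p.1 : R4), (p.2 : R4))) :=
      (contMDiff_coe_sphere.comp contMDiff_fst).prodMk_space
        (contMDiff_coe_sphere.comp contMDiff_snd)
    have h2 : ContMDiff 𝓘(ℝ, R4 × R4) 𝓘(ℝ, R4) (⊤ : ℕ∞)
        (fun p : R4 × R4 => qmul p.1 p.2) := contDiff_qmul.contMDiff
    have h3 : ContMDiff ((𝓡 3).prod (𝓡 3)) 𝓘(ℝ, R4) (⊤ : ℕ∞)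
        (fun p : S3 × S3 => qmul p.1 p.2) := 
      ContMDiff.comp (g := fun p : R4 × R4 => qmul p.1 p.2)
        (f := fun p : S3 × S3 => ((p.1 : R4), (p.2 : R4))) h2 h1
    exact ContMDiff.codRestrict_sphere h3 hmem
  · intro a
    refine ⟨⟨_, hstar a⟩, fun b => ?_⟩
    apply Subtype.ext
    simp [qmul, ← mul_assoc, Quaternion.self_mul_star]
    simp [hn]
  · intro b
    refine ⟨⟨_, hstar b⟩, fun a => ?_⟩
    apply Subtype.ext
    simp [qmul, mul_assoc, Quaternion.star_mul_self]
    simp [hn]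

/-- The smooth extension to `ℝ⁵` of the suspended Hopf map. -/
noncomputable def F (x : R5) : R4 :=
  !₂[2 * (x 0 * x 2 + x 1 * x 3) / (1 + x 4 ^ 2),
     2 * (x 1 * x 2 - x 0 * x 3) / (1 + x 4 ^ 2),
     (x 0 ^ 2 + x 1 ^ 2 - x 2 ^ 2 - x 3 ^ 2) / (1 + x 4 ^ 2),
     2 * x 4 / (1 + x 4 ^ 2)]

theorem contDiff_F : ContDiff ℝ (⊤ : ℕ∞) F := by
  have hD : ∀ x : R5, 1 + x 4 ^ 2 ≠ 0 := fun x => by positivity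
  rw [contDiff_euclidean]
  intro i
  fin_cases i <;> simp only [F] <;> simp <;>
    exact ContDiff.div (by fun_prop) (by fun_prop) hD

theorem mem_S4 (p : S4) :
    (p : R5) 0 ^ 2 + (p : R5) 1 ^ 2 + (p : R5) 2 ^ 2 + (p : R5) 3 ^ 2 + (p : R5) 4 ^ 2 = 1 := by
  have h := norm_eq_of_mem_sphere p
  have h2 := EuclideanSpace.real_norm_sq_eq (p : R5)
  rw [h] at h2
  simp [Fin.sum_univ_succ] at h2
  linarith

theorem F_mem (p : S4) : F p ∈ sphere (0 : R4) 1 := by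
  have h := mem_S4 p
  have hD : 1 + (p : R5) 4 ^ 2 ≠ 0 := by positivity
  have : ‖F p‖ ^ 2 = 1 := by
    rw [EuclideanSpace.real_norm_sq_eq]
    simp [Fin.sum_univ_succ, F]
    field_simp
    linear_combination ((p : R5) 0 ^ 2 + (p : R5) 1 ^ 2 + (p : R5) 2 ^ 2 + (p : R5) 3 ^ 2 + 1 -
      (p : R5) 4 ^ 2) * h
  rw [mem_sphere_zero_iff_norm]
  have h0 := norm_nonneg (F p)
  nlinarith

/-- The suspended Hopf map. -/
noncomputable def f0 : S4 → S3 := Set.codRestrict (fun p : S4 => F p) _ F_mem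

theorem contMDiff_f0 : ContMDiff (𝓡 4) (𝓡 3) (⊤ : ℕ∞) f0 := by
  apply ContMDiff.codRestrict_sphere
  exact contDiff_F.contMDiff.comp contMDiff_coe_sphere

/-- Lift of tangent vectors through the differential of the suspended Hopf map. -/
theorem exists_lift (p : S4) (hp : (p : R5) 4 ^ 2 ≠ 1) (y : R4) (hy : inner ℝ (F p) y = 0) :
    ∃ v : R5, inner ℝ (p : R5) v = 0 ∧ HasDerivAt (fun s : ℝ => F (p + s • v)) y 0 := by
  have h := mem_S4 p
  have hD : 1 + (p : R5) 4 ^ 2 ≠ 0 := by positivity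
  have hr : 1 - (p : R5) 4 ^ 2 ≠ 0 := fun h => hp (by linarith)
  generalize hP : (p : R5) = P at *
  simp [PiLp.inner_apply, Fin.sum_univ_succ, F] at hy
  obtain ⟨a, ha⟩ : ∃ a, P 0 = a := ⟨_, rfl⟩
  obtain ⟨b, hb⟩ : ∃ a, P 1 = a := ⟨_, rfl⟩
  obtain ⟨c, hc⟩ : ∃ a, P 2 = a := ⟨_, rfl⟩
  obtain ⟨d, hd⟩ : ∃ a, P 3 = a := ⟨_, rfl⟩
  obtain ⟨t, ht⟩ : ∃ a, P 4 = a := ⟨_, rfl⟩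
  obtain ⟨y0, hy0⟩ : ∃ a, y 0 = a := ⟨_, rfl⟩
  obtain ⟨y1, hy1⟩ : ∃ a, y 1 = a := ⟨_, rfl⟩
  obtain ⟨y2, hy2⟩ : ∃ a, y 2 = a := ⟨_, rfl⟩
  obtain ⟨y3, hy3⟩ : ∃ a, y 3 = a := ⟨_, rfl⟩
  simp only [ha, hb, hc, hd, ht, hy0, hy1, hy2, hy3] at hp h hD hr hy
  have hyy : y0 * (2 * (a * c + b * d)) + y1 * (2 * (b * c - a * d)) +
      y2 * (a ^ 2 + b ^ 2 - c ^ 2 - d ^ 2) + y3 * (2 * t) = 0 := by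
    field_simp at hy
    linarith
  obtain ⟨k, hk⟩ : ∃ k, k = (1 + t ^ 2) / (2 * (1 - t ^ 2)) := ⟨_, rfl⟩
  obtain ⟨z0, hz0⟩ : ∃ z, z = y0 + t * y3 / (1 - t ^ 2) * (2 * (a * c + b * d)) := ⟨_, rfl⟩
  obtain ⟨z1, hz1⟩ : ∃ z, z = y1 + t * y3 / (1 - t ^ 2) * (2 * (b * c - a * d)) := ⟨_, rfl⟩
  obtain ⟨z2, hz2⟩ : ∃ z, z = y2 + t * y3 / (1 - t ^ 2) * (a ^ 2 + b ^ 2 - c ^ 2 - d ^ 2) :=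
    ⟨_, rfl⟩
  have hr' : 1 - t ^ 2 = a ^ 2 + b ^ 2 + c ^ 2 + d ^ 2 := by linarith
  have hn : (2 * (a * c + b * d)) ^ 2 + (2 * (b * c - a * d)) ^ 2 +
      (a ^ 2 + b ^ 2 - c ^ 2 - d ^ 2) ^ 2 = (1 - t ^ 2) ^ 2 := by rw [hr']; ring
  have hkr : 2 * k * (1 - t ^ 2) = 1 + t ^ 2 := by rw [hk]; field_simp
  have hkr' : 2 * k * (a ^ 2 + b ^ 2 + c ^ 2 + d ^ 2) = 1 + t ^ 2 := by rw [← hr', hkr]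
  have hw : t * y3 / (1 - t ^ 2) * (1 + t ^ 2) = 2 * t * k * y3 := by rw [hk]; field_simp
  have hzh : z0 * (2 * (a * c + b * d)) + z1 * (2 * (b * c - a * d)) +
      z2 * (a ^ 2 + b ^ 2 - c ^ 2 - d ^ 2) = - (t * y3 * (1 + t ^ 2)) := by
    have : z0 * (2 * (a * c + b * d)) + z1 * (2 * (b * c - a * d)) +
      z2 * (a ^ 2 + b ^ 2 - c ^ 2 - d ^ 2) = (y0 * (2 * (a * c + b * d))
        + y1 * (2 * (b * c - a * d)) +
      y2 * (a ^ 2 + b ^ 2 - c ^ 2 - d ^ 2)) + t * y3 / (1 - t ^ 2) *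
      ((2 * (a * c + b * d)) ^ 2 + (2 * (b * c - a * d)) ^ 2 +
      (a ^ 2 + b ^ 2 - c ^ 2 - d ^ 2) ^ 2) := by rw [hz0, hz1, hz2]; ring
    rw [this, hn]
    field_simp
    linarith
  refine ⟨!₂[k * (z0 * c - z1 * d + z2 * a), k * (z0 * d + z1 * c + z2 * b),
    k * (z0 * a + z1 * b - z2 * c), k * (z0 * b - z1 * a - z2 * d), k * ((1 + t ^ 2) * y3)], ?_, ?_⟩
  · simp [PiLp.inner_apply, Fin.sum_univ_succ, ha, hb, hc, hd, ht]
    linear_combination k * hzh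
  · have key : ∀ (N : ℝ → ℝ) (N' y : ℝ), HasDerivAt N N' 0 →
        N' * (1 + t ^ 2) - N 0 * (2 * t * (k * ((1 + t ^ 2) * y3))) = y * (1 + t ^ 2) ^ 2 →
        HasDerivAt (fun s => N s / (1 + (t + s * (k * ((1 + t ^ 2) * y3))) ^ 2)) y 0 := by
      intro N N' y hN hh
      have hlin : HasDerivAt (fun s : ℝ => 1 + (t + s * (k * ((1 + t ^ 2) * y3))) ^ 2)
          (2 * t * (k * ((1 + t ^ 2) * y3))) 0 := by
        have := ((((hasDerivAt_id (0 : ℝ)).mul_const (k * ((1 + t ^ 2) * y3))).const_add t).pow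
          2).const_add 1
        convert! this using 1
        simp
      have := hN.div hlin (by simpa using hD)
      convert! this using 1
      simp
      rw [eq_div_iff (by positivity)]
      linarith
    have lin : ∀ u w : ℝ, HasDerivAt (fun s : ℝ => u + s * w) w 0 := by
      intro u w
      simpa using ((hasDerivAt_id (0 : ℝ)).mul_const w).const_add u
    suffices aux : ∀ i, HasDerivAt (fun s : ℝ => F (P + s • !₂[k * (z0 * c - z1 * d + z2 * a),
        k * (z0 * d + z1 * c + z2 * b), k * (z0 * a + z1 * b - z2 * c),
        k * (z0 * b - z1 * a - z2 * d), k * ((1 + t ^ 2) * y3)]) i) (y i) 0 by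
      rw [hasDerivAt_iff_hasFDerivAt, ← hasFDerivWithinAt_univ, hasFDerivWithinAt_euclidean]
      intro i
      exact ((aux i).hasFDerivAt.hasFDerivWithinAt).congr_fderiv (by ext; simp)
    intro i
    fin_cases i <;> simp [F, ha, hb, hc, hd, ht, hy0, hy1, hy2, hy3]
    · apply key
      · exact ((((lin a _).mul (lin c _)).add ((lin b _).mul (lin d _))).const_mul 2)
      · simp
        linear_combination (z0 * (1 + t ^ 2)) * hkr' + (1 + t ^ 2) ^ 2 * hz0 +
          (2 * (a * c + b * d)) * (1 + t ^ 2) * hw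
    · apply key
      · exact ((((lin b _).mul (lin c _)).sub ((lin a _).mul (lin d _))).const_mul 2)
      · simp
        linear_combination (z1 * (1 + t ^ 2)) * hkr' + (1 + t ^ 2) ^ 2 * hz1 +
          (2 * (b * c - a * d)) * (1 + t ^ 2) * hw
    · apply key
      · exact ((((lin a _).pow 2).add ((lin b _).pow 2)).sub ((lin c _).pow 2)).sub
          ((lin d _).pow 2)
      · simp
        linear_combination (z2 * (1 + t ^ 2)) * hkr' + (1 + t ^ 2) ^ 2 * hz2 +
          (a ^ 2 + b ^ 2 - c ^ 2 - d ^ 2) * (1 + t ^ 2) * hw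
    · apply key
      · exact ((lin t _).const_mul 2)
      · simp
        linear_combination (1 + t ^ 2) * y3 * hkr

theorem surj_f0 (p : S4) (hp : (p : R5) 4 ^ 2 ≠ 1) :
    Surjective (mfderiv (𝓡 4) (𝓡 3) f0 p) := by
  intro w
  have hy : mvfderiv (𝓡 3) ((↑) : S3 → R4) (f0 p) w ∈
      (mvfderiv (𝓡 3) ((↑) : S3 → R4) (f0 p)).range := ⟨w, rfl⟩
  rw [range_mvfderiv_subtypeVal, Submodule.mem_orthogonal_singleton_iff_inner_right] at hy
  obtain ⟨v, hv, hder⟩ := exists_lift p hp _ hy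
  have hv' : v ∈ (mvfderiv (𝓡 4) ((↑) : S4 → R5) p).range := by
    rw [range_mvfderiv_subtypeVal, Submodule.mem_orthogonal_singleton_iff_inner_right]
    exact hv
  obtain ⟨v', hv'⟩ := hv'
  refine ⟨v', injective_mvfderiv_subtypeVal_sphere _ ?_⟩
  have hF : DifferentiableAt ℝ F (p : R5) := (contDiff_F.differentiable (by simp)) _
  have h1 := mfderiv_comp_apply (I := 𝓡 4) (I' := 𝓡 3) (I'' := 𝓘(ℝ, R4)) p (g := ((↑) : S3 → R4)) (f := f0)
    ((contMDiff_coe_sphere (m := 1) _).mdifferentiableAt (by simp))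
    ((contMDiff_f0 p).mdifferentiableAt (by simp)) v'
  have h2 := mfderiv_comp_apply (I := 𝓡 4) (I' := 𝓘(ℝ, R5)) (I'' := 𝓘(ℝ, R4)) p (g := F) (f := ((↑) : S4 → R5))
    hF.mdifferentiableAt
    ((contMDiff_coe_sphere (m := 1) _).mdifferentiableAt (by simp)) v'
  refine h1.symm.trans (h2.trans ?_)
  have h3 : HasDerivAt (fun s : ℝ => F (p + s • v)) (fderiv ℝ F p v) 0 := by
    have hl : HasDerivAt (fun s : ℝ => (p : R5) + s • v) v 0 := by
      simpa using ((hasDerivAt_id (0 : ℝ)).smul_const v).const_add (p : R5)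
    have hF' : HasFDerivAt F (fderiv ℝ F p) ((p : R5) + (0 : ℝ) • v) := by
      simpa using hF.hasFDerivAt
    exact hF'.comp_hasDerivAt (0 : ℝ) hl
  rw [mfderiv_eq_fderiv]
  exact (congrArg (fderiv ℝ F p) hv').trans (h3.unique hder)

theorem main (m : ℕ) : ∃ f : (∀ _ : Fin m, S4) → S3,
    ContMDiff (ModelWithCorners.pi fun _ : Fin m => 𝓡 4) (𝓡 3) (⊤ : ℕ∞) f ∧
    ∀ x, (∃ i, (x i : R5) 4 ^ 2 ≠ 1) →
      Surjective (mfderiv (ModelWithCorners.pi fun _ : Fin m => 𝓡 4) (𝓡 3) f x) := by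
  obtain ⟨μ, hμ, hl, hr⟩ := exists_mul
  have hL : ∀ a, ContMDiff (𝓡 3) (𝓡 3) (⊤ : ℕ∞) (fun b => μ (a, b)) := fun a =>
    hμ.comp (contMDiff_const.prodMk contMDiff_id)
  have hR : ∀ b, ContMDiff (𝓡 3) (𝓡 3) (⊤ : ℕ∞) (fun a => μ (a, b)) := fun b =>
    hμ.comp (contMDiff_id.prodMk contMDiff_const)
  have gen : ∀ g g' : S3 → S3, ContMDiff (𝓡 3) (𝓡 3) (⊤ : ℕ∞) g →
      ContMDiff (𝓡 3) (𝓡 3) (⊤ : ℕ∞) g' → (∀ x, g (g' x) = x) → (∀ x, g' (g x) = x) →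
      ∀ x, Surjective (mfderiv (𝓡 3) (𝓡 3) g x) := by
    intro g g' hg hg' h h' x w
    have hc := mfderiv_comp_apply_of_eq (I := 𝓡 3) (I' := 𝓡 3) (I'' := 𝓡 3) (f := g')
      (g := g) (x := g x) (y := x)
      ((hg x).mdifferentiableAt (by simp)) ((hg' _).mdifferentiableAt (by simp)) (h' x) w
    have : g ∘ g' = id := funext h
    rw [this, mfderiv_id] at hc
    exact ⟨_, hc.symm⟩
  have hLs : ∀ a b, Surjective (mfderiv (𝓡 3) (𝓡 3) (fun b => μ (a, b)) b) := by
    intro a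
    obtain ⟨a', ha'⟩ := hl a
    obtain ⟨a'', ha''⟩ := hl a'
    refine gen _ (fun b => μ (a', b)) (hL a) (hL a') ha' fun x => ?_
    have h1 : μ (a, x) = μ (a'', x) := by
      conv_lhs => rw [← ha'' x]
      exact ha' _
    simp only [h1, ha'']
  have hRs : ∀ b a, Surjective (mfderiv (𝓡 3) (𝓡 3) (fun a => μ (a, b)) a) := by
    intro b
    obtain ⟨b', hb'⟩ := hr b
    obtain ⟨b'', hb''⟩ := hr b'
    refine gen _ (fun a => μ (a, b')) (hR b) (hR b') hb' fun x => ?_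
    have h1 : μ (x, b) = μ (x, b'') := by
      conv_lhs => rw [← hb'' x]
      exact hb' _
    simp only [h1, hb'']
  induction m with
  | zero =>
    refine ⟨fun _ => ⟨EuclideanSpace.single 0 1, by simp⟩, contMDiff_const, ?_⟩
    rintro x ⟨i, -⟩
    exact i.elim0
  | succ m ih =>
    obtain ⟨g, hg, hgs⟩ := ih
    have htail : ContMDiff (ModelWithCorners.pi fun _ : Fin (m + 1) => 𝓡 4)
        (ModelWithCorners.pi fun _ : Fin m => 𝓡 4) (⊤ : ℕ∞)
        (fun (x : ∀ _ : Fin (m + 1), S4) (i : Fin m) => x i.succ) :=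
      contMDiff_piMk fun i =>
        contMDiff_proj (I := fun _ : Fin (m + 1) => 𝓡 4) (M := fun _ => S4) i.succ
    have hhead : ContMDiff (ModelWithCorners.pi fun _ : Fin (m + 1) => 𝓡 4) (𝓡 4) (⊤ : ℕ∞)
        (fun (x : ∀ _ : Fin (m + 1), S4) => x 0) :=
      contMDiff_proj (I := fun _ : Fin (m + 1) => 𝓡 4) (M := fun _ => S4) 0
    have hf : ContMDiff (ModelWithCorners.pi fun _ : Fin (m + 1) => 𝓡 4) (𝓡 3) (⊤ : ℕ∞)
        (fun (x : ∀ _ : Fin (m + 1), S4) => μ (f0 (x 0), g fun i => x i.succ)) :=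
      hμ.comp ((contMDiff_f0.comp hhead).prodMk (hg.comp htail))
    refine ⟨_, hf, ?_⟩
    generalize hfdef : (fun (x : ∀ _ : Fin (m + 1), S4) => μ (f0 (x 0), g fun i => x i.succ)) = f
      at hf
    intro x hx
    by_cases h0 : (x 0 : R5) 4 ^ 2 ≠ 1
    · have hj : ContMDiff (𝓡 4) (ModelWithCorners.pi fun _ : Fin (m + 1) => 𝓡 4) (⊤ : ℕ∞)
          (fun s : S4 => (Fin.cons s (fun i => x i.succ) : ∀ _ : Fin (m + 1), S4)) := by
        refine contMDiff_piMk fun i => ?_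
        refine Fin.cases ?_ (fun i => ?_) i
        · exact contMDiff_id
        · exact contMDiff_const
      have hjx : (fun s : S4 => (Fin.cons s (fun i => x i.succ) : ∀ _ : Fin (m + 1), S4)) (x 0)
          = x := Fin.cons_self_tail x
      have hcomp : f ∘ (fun s : S4 => (Fin.cons s (fun i => x i.succ) : ∀ _ : Fin (m + 1), S4))
          = (fun a => μ (a, g fun i => x i.succ)) ∘ f0 := by
        rw [← hfdef]; rfl
      intro w
      obtain ⟨u, hu⟩ := hRs (g fun i => x i.succ) (f0 (x 0)) w
      obtain ⟨v, hv⟩ := surj_f0 (x 0) h0 u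
      have c1 := mfderiv_comp_apply_of_eq (I := 𝓡 4)
        (I' := ModelWithCorners.pi fun _ : Fin (m + 1) => 𝓡 4) (I'' := 𝓡 3) (x 0)
        ((hf x).mdifferentiableAt (by simp)) ((hj (x 0)).mdifferentiableAt (by simp)) hjx v
      have c2 := mfderiv_comp_apply (I := 𝓡 4) (I' := 𝓡 3) (I'' := 𝓡 3) (x 0)
        ((hR (g fun i => x i.succ) (f0 (x 0))).mdifferentiableAt (by simp))
        ((contMDiff_f0 (x 0)).mdifferentiableAt (by simp)) v
      rw [hcomp] at c1
      rw [hv, hu] at c2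
      exact ⟨_, c1.symm.trans c2⟩
    · have hx' : ∃ i : Fin m, (x i.succ : R5) 4 ^ 2 ≠ 1 := by
        obtain ⟨i, hi⟩ := hx
        revert hi
        refine Fin.cases (fun h => absurd h h0) (fun i hi => ⟨i, hi⟩) i
      have hj : ContMDiff (ModelWithCorners.pi fun _ : Fin m => 𝓡 4)
          (ModelWithCorners.pi fun _ : Fin (m + 1) => 𝓡 4) (⊤ : ℕ∞)
          (fun s : (∀ _ : Fin m, S4) => (Fin.cons (x 0) s : ∀ _ : Fin (m + 1), S4)) := by
        refine contMDiff_piMk fun i => ?_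
        refine Fin.cases ?_ (fun i => ?_) i
        · exact contMDiff_const
        · exact contMDiff_proj (I := fun _ : Fin m => 𝓡 4) (M := fun _ => S4) i
      have hjx : (fun s : (∀ _ : Fin m, S4) => (Fin.cons (x 0) s : ∀ _ : Fin (m + 1), S4))
          (fun i => x i.succ) = x := Fin.cons_self_tail x
      have hcomp : f ∘ (fun s : (∀ _ : Fin m, S4) => (Fin.cons (x 0) s : ∀ _ : Fin (m + 1), S4))
          = (fun b => μ (f0 (x 0), b)) ∘ g := by
        rw [← hfdef]; rfl
      intro w
      obtain ⟨u, hu⟩ := hLs (f0 (x 0)) (g fun i => x i.succ) w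
      obtain ⟨v, hv⟩ := hgs (fun i => x i.succ) hx' u
      have c1 := mfderiv_comp_apply_of_eq (I := ModelWithCorners.pi fun _ : Fin m => 𝓡 4)
        (I' := ModelWithCorners.pi fun _ : Fin (m + 1) => 𝓡 4) (I'' := 𝓡 3) (fun i : Fin m => x i.succ)
        ((hf x).mdifferentiableAt (by simp))
        ((hj (fun i => x i.succ)).mdifferentiableAt (by simp)) hjx v
      have c2 := mfderiv_comp_apply (I := ModelWithCorners.pi fun _ : Fin m => 𝓡 4)
        (I' := 𝓡 3) (I'' := 𝓡 3) (fun i : Fin m => x i.succ)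
        ((hL (f0 (x 0)) (g fun i => x i.succ)).mdifferentiableAt (by simp))
        ((hg (fun i => x i.succ)).mdifferentiableAt (by simp)) v
      rw [hcomp] at c1
      rw [hv, hu] at c2
      exact ⟨_, c1.symm.trans c2⟩

/-- There are at most two poles. -/
theorem exists_poles : ∃ P : Finset S4, P.card ≤ 2 ∧ ∀ p : S4, (p : R5) 4 ^ 2 = 1 → p ∈ P := by
  classical
  let N : S4 := ⟨EuclideanSpace.single 4 1, by simp⟩
  let S : S4 := ⟨EuclideanSpace.single 4 (-1), by simp⟩
  refine ⟨{N, S}, Finset.card_le_two, fun p hp => ?_⟩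
  have h := mem_S4 p
  have h0 : (p : R5) 0 = 0 := by nlinarith [sq_nonneg ((p : R5) 0), sq_nonneg ((p : R5) 1), sq_nonneg ((p : R5) 2), sq_nonneg ((p : R5) 3)]
  have h1 : (p : R5) 1 = 0 := by nlinarith [sq_nonneg ((p : R5) 0), sq_nonneg ((p : R5) 1), sq_nonneg ((p : R5) 2), sq_nonneg ((p : R5) 3)]
  have h2 : (p : R5) 2 = 0 := by nlinarith [sq_nonneg ((p : R5) 0), sq_nonneg ((p : R5) 1), sq_nonneg ((p : R5) 2), sq_nonneg ((p : R5) 3)]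
  have h3 : (p : R5) 3 = 0 := by nlinarith [sq_nonneg ((p : R5) 0), sq_nonneg ((p : R5) 1), sq_nonneg ((p : R5) 2), sq_nonneg ((p : R5) 3)]
  rw [Finset.mem_insert, Finset.mem_singleton]
  rcases (show (p : R5) 4 = 1 ∨ (p : R5) 4 = -1 by simpa using hp) with h4 | h4
  · left
    apply Subtype.ext
    ext i
    fin_cases i <;> simp [N, h0, h1, h2, h3, h4]
  · right
    apply Subtype.ext
    ext i
    fin_cases i <;> simp [S, h0, h1, h2, h3, h4]

end SphereCrit

/-- **Upper bound `φ(S⁴ × ⋯ × S⁴, S³) ≤ 2^m`.**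
For every `m ≥ 1` there is a `C^∞` map from the `m`-fold product of `4`-spheres to the
`3`-sphere whose set of critical points is finite of cardinality at most `2^m`. -/
theorem exists_smooth_map_products_of_spheres_to_sphere_card_critical_le
    (m : ℕ) (hm : 1 ≤ m) :
    ∃ f : (∀ _ : Fin m, sphere (0 : EuclideanSpace ℝ (Fin 5)) 1) →
        sphere (0 : EuclideanSpace ℝ (Fin 4)) 1,
      ContMDiff (ModelWithCorners.pi fun _ : Fin m => 𝓡 4) (𝓡 3) (⊤ : ℕ∞) f ∧
      {x : ∀ _ : Fin m, sphere (0 : EuclideanSpace ℝ (Fin 5)) 1 |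
        ¬ Surjective (mfderiv (ModelWithCorners.pi fun _ : Fin m => 𝓡 4) (𝓡 3) f x)}.Finite ∧
      {x : ∀ _ : Fin m, sphere (0 : EuclideanSpace ℝ (Fin 5)) 1 |
        ¬ Surjective (mfderiv (ModelWithCorners.pi fun _ : Fin m => 𝓡 4) (𝓡 3) f x)}.ncard ≤
        2 ^ m := by
  obtain ⟨f, hf, hs⟩ := SphereCrit.main m
  obtain ⟨P, hP, hmem⟩ := SphereCrit.exists_poles
  have hsub : {x : ∀ _ : Fin m, sphere (0 : EuclideanSpace ℝ (Fin 5)) 1 |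
      ¬ Surjective (mfderiv (ModelWithCorners.pi fun _ : Fin m => 𝓡 4) (𝓡 3) f x)} ⊆
      ((Fintype.piFinset fun _ : Fin m => P : Finset (∀ _ : Fin m, SphereCrit.S4)) :
        Set (∀ _ : Fin m, SphereCrit.S4)) := by
    intro x hx
    rw [Finset.mem_coe, Fintype.mem_piFinset]
    intro i
    apply hmem
    by_contra hi
    exact hx (hs x ⟨i, hi⟩)
  refine ⟨f, hf, (Finset.finite_toSet _).subset hsub, ?_⟩
  refine (Set.ncard_le_ncard hsub (Finset.finite_toSet _)).trans ?_
  rw [Set.ncard_coe_finset, Fintype.card_piFinset]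
  simpa using Nat.pow_le_pow_left hP m
end

section
/- For every natural number m ≥ 1, every C^∞ map f from the m-fold product S⁴ × S⁴ × ⋯ × S⁴ of 4-spheres to the 3-sphere S³ has at least one critical point, i.e. there exists a point x at which the differential mfderiv f x : T_x(S⁴ × ⋯ × S⁴) → T_{f(x)} S³ is not surjective. (This is the lower bound 1 ≤ φ(S⁴ × ⋯ × S⁴, S³); in particular S⁴ × ⋯ × S⁴ does not fiber smoothly over S³.) -/
open Function Manifold Metric Module

section MasterLemma
open MeasureTheory
open scoped Pointwise

variable {E : Type*} [NormedAddCommGroup E] [NormedSpace ℝ E] [FiniteDimensional ℝ E]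

lemma ms_det_pos (A : E →L[ℝ] E) (l : ℝ) (h : ‖A‖ < l) :
    0 < (l • ContinuousLinearMap.id ℝ E + A).det := by
  have hl : 0 < l := lt_of_le_of_lt (norm_nonneg _) h
  have hne : ∀ s ∈ Set.Icc (0 : ℝ) 1, (l • ContinuousLinearMap.id ℝ E + s • A).det ≠ 0 := by
    intro s hs h0
    have h1 : LinearMap.ker ((l • ContinuousLinearMap.id ℝ E + s • A : E →L[ℝ] E) : E →ₗ[ℝ] E) ≠ ⊥ := by
      intro hk
      exact (LinearMap.bot_lt_ker_of_det_eq_zero h0).ne' hk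
    obtain ⟨x, hx, hx0⟩ := Submodule.exists_mem_ne_zero_of_ne_bot h1
    have hx' : l • x + s • A x = 0 := by simpa using hx
    have h2 : l • x = - (s • A x) := eq_neg_of_add_eq_zero_left hx'
    have h3 : ‖l • x‖ = ‖s • A x‖ := by rw [h2, norm_neg]
    rw [norm_smul, norm_smul, Real.norm_of_nonneg hl.le, Real.norm_of_nonneg hs.1] at h3
    have h4 := A.le_opNorm x
    have hxp : 0 < ‖x‖ := norm_pos_iff.2 hx0
    have h5 : s * ‖A x‖ ≤ 1 * ‖A x‖ := mul_le_mul_of_nonneg_right hs.2 (norm_nonneg _)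
    nlinarith
  have hcont : Continuous fun s : ℝ => (l • ContinuousLinearMap.id ℝ E + s • A).det :=
    ContinuousLinearMap.continuous_det.comp (by fun_prop)
  by_contra hneg
  push Not at hneg
  have h0 : 0 ≤ (l • ContinuousLinearMap.id ℝ E + (0 : ℝ) • A).det := by
    have : (l • ContinuousLinearMap.id ℝ E + (0 : ℝ) • A).det = l ^ finrank ℝ E := by
      simp [ContinuousLinearMap.det]
    rw [this]; positivity
  have := intermediate_value_Icc' (zero_le_one (α := ℝ)) hcont.continuousOn
  obtain ⟨s, hs, hs0⟩ := this ⟨by simpa using hneg, h0⟩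
  exact hne s hs hs0

variable [MeasurableSpace E] [BorelSpace E]

lemma ms_key (μ : Measure E) [μ.IsAddHaarMeasure] (w : E → E) (hw : ContDiff ℝ 1 w)
    (C : NNReal) (hC : LipschitzWith C w) (R : ℝ)
    (hR : ∀ x, x ∉ closedBall (0 : E) R → w x = 0) (l : ℝ) (hl : C < l) :
    ∫ x in closedBall (0 : E) R, (l • ContinuousLinearMap.id ℝ E + fderiv ℝ w x).det ∂μ
      = l ^ finrank ℝ E * μ.real (closedBall (0 : E) R) := by
  have hl0 : 0 < l := lt_of_le_of_lt C.2 hl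
  set g : E → E := fun x => l • x + w x with hg
  have hd : ∀ x, HasFDerivAt g (l • ContinuousLinearMap.id ℝ E + fderiv ℝ w x) x := fun x =>
    ((hasFDerivAt_id x).const_smul l).add
      ((hw.differentiable one_ne_zero).differentiableAt.hasFDerivAt)
  have hinj : Function.Injective g := by
    intro x y hxy
    by_contra hne
    have h1 : l • (x - y) = w y - w x := by
      have : l • x + w x = l • y + w y := hxy
      rw [smul_sub, sub_eq_sub_iff_add_eq_add, this, add_comm]
    have h2 := hC.dist_le_mul y x
    rw [dist_eq_norm, dist_eq_norm, ← h1, norm_smul, Real.norm_of_nonneg hl0.le,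
      norm_sub_rev y x] at h2
    have : 0 < ‖x - y‖ := norm_pos_iff.2 (sub_ne_zero.2 hne)
    nlinarith
  have hsurj : Function.Surjective g := by
    intro y
    let T : E → E := fun x => l⁻¹ • (y - w x)
    have hT : ContractingWith (Real.toNNReal (C / l)) T := by
      refine ⟨?_, LipschitzWith.of_dist_le_mul fun a b => ?_⟩
      · rw [← NNReal.coe_lt_coe, Real.coe_toNNReal _ (by positivity)]
        simpa using (div_lt_one hl0).2 hl
      · rw [Real.coe_toNNReal _ (by positivity), dist_eq_norm]
        have : T a - T b = l⁻¹ • (w b - w a) := by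
          simp only [T, ← smul_sub]; congr 1; abel
        rw [this, norm_smul, Real.norm_of_nonneg (by positivity)]
        have h2 := hC.dist_le_mul b a
        rw [dist_eq_norm, dist_comm] at h2
        calc l⁻¹ * ‖w b - w a‖ ≤ l⁻¹ * (C * dist a b) := by gcongr
          _ = _ := by ring
    refine ⟨hT.fixedPoint T, ?_⟩
    have h := hT.fixedPoint_isFixedPt
    have h' : l⁻¹ • (y - w (hT.fixedPoint T)) = hT.fixedPoint T := h
    have h2 : l • hT.fixedPoint T = y - w (hT.fixedPoint T) := by
      conv_lhs => rw [← h']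
      rw [smul_smul, mul_inv_cancel₀ hl0.ne', one_smul]
    simp only [hg, h2, sub_add_cancel]
  have himg : g '' closedBall (0 : E) R = l • closedBall (0 : E) R := by
    have h1 : g '' (closedBall (0 : E) R)ᶜ = (l • closedBall (0 : E) R)ᶜ := by
      have hb : Function.Bijective fun x : E => l • x :=
        MulAction.bijective (Units.mk0 l hl0.ne')
      rw [← Set.image_smul, ← Set.image_compl_eq hb]
      apply Set.image_congr
      intro x hx
      simp [hg, hR x hx]
    rw [Set.image_compl_eq ⟨hinj, hsurj⟩] at h1
    exact compl_injective h1
  have hpos : ∀ x, 0 < (l • ContinuousLinearMap.id ℝ E + fderiv ℝ w x).det := fun x =>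
    ms_det_pos _ _ (lt_of_le_of_lt (norm_fderiv_le_of_lipschitz ℝ hC) hl)
  have := integral_image_eq_integral_abs_det_fderiv_smul μ
    (isClosed_closedBall (x := (0 : E)) (ε := R)).measurableSet
    (fun x _ => (hd x).hasFDerivWithinAt) hinj.injOn (fun _ => (1 : ℝ))
  simp only [abs_of_pos (hpos _), smul_eq_mul, mul_one, integral_const, himg] at this
  rw [← this]
  simp only [measureReal_restrict_apply MeasurableSet.univ, Set.univ_inter]
  rw [Measure.real, Measure.addHaar_smul, ENNReal.toReal_mul, abs_of_pos (by positivity),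
    ENNReal.toReal_ofReal (by positivity), Measure.real]

lemma ms_integral_det_eq_zero (μ : Measure E) [μ.IsAddHaarMeasure] (hN : 0 < finrank ℝ E)
    (w : E → E) (hw : ContDiff ℝ 1 w) (hc : HasCompactSupport w) :
    ∫ x, (fderiv ℝ w x).det ∂μ = 0 := by
  obtain ⟨C, hC⟩ := ContDiff.lipschitzWith_of_hasCompactSupport hc hw one_ne_zero
  obtain ⟨R, hR⟩ := (IsCompact.isBounded hc).subset_closedBall (0 : E)
  have hR' : ∀ x, x ∉ closedBall (0 : E) R → w x = 0 := fun x hx =>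
    image_eq_zero_of_notMem_tsupport fun h => hx (hR h)
  have hD : ∀ x, x ∉ closedBall (0 : E) R → (fderiv ℝ w x).det = 0 := by
    intro x hx
    have h : fderiv ℝ w x = 0 := by
      have := (tsupport_fderiv_subset ℝ (f := w))
      exact image_eq_zero_of_notMem_tsupport fun h => hx (hR (this h))
    have : Nontrivial E := Module.finrank_pos_iff.1 hN
    rw [h]; simp [ContinuousLinearMap.det]
  rw [← setIntegral_eq_integral_of_forall_compl_eq_zero (s := closedBall (0 : E) R) (fun x hx => hD x hx)]
  set N := finrank ℝ E
  set v : ℕ → ℝ := fun k => C + 1 + k with hv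
  have hvinj : Set.InjOn v (Finset.range (N + 1)) := by
    intro a _ b _ h
    simpa [hv] using h
  set c : ℕ → ℝ := fun k => (Lagrange.basis (Finset.range (N + 1)) v k).eval 0 with hcdef
  have hint : ∀ p : Polynomial ℝ, p.natDegree ≤ N →
      p.eval 0 = ∑ k ∈ Finset.range (N + 1), c k * p.eval (v k) := by
    intro p hp
    have h1 : p.degree < (Finset.range (N + 1)).card := by
      rw [Finset.card_range]
      refine lt_of_le_of_lt Polynomial.degree_le_natDegree ?_
      exact_mod_cast Nat.lt_succ_of_le hp
    conv_lhs => rw [Lagrange.eq_interpolate hvinj h1]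
    rw [Lagrange.interpolate_apply, Polynomial.eval_finsetSum]
    refine Finset.sum_congr rfl fun k _ => ?_
    simp [hcdef, mul_comm]
  have hdet : ∀ A : E →L[ℝ] E, A.det = ∑ k ∈ Finset.range (N + 1),
      c k * ((v k) • ContinuousLinearMap.id ℝ E + A).det := by
    intro A
    have h := hint (LinearMap.charpoly (-(A : E →ₗ[ℝ] E))) (LinearMap.charpoly_natDegree _).le
    simp only [LinearMap.eval_charpoly, sub_neg_eq_add, map_zero, zero_add] at h
    rw [ContinuousLinearMap.det, h]
    refine Finset.sum_congr rfl fun k _ => ?_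
    congr 2
  have hcontd : Continuous (fderiv ℝ w) := hw.continuous_fderiv one_ne_zero
  rw [show (fun x => (fderiv ℝ w x).det) = fun x => ∑ k ∈ Finset.range (N + 1),
      c k * ((v k) • ContinuousLinearMap.id ℝ E + fderiv ℝ w x).det from funext fun x => hdet _]
  rw [integral_finsetSum]
  · simp_rw [integral_const_mul]
    have : ∀ k ∈ Finset.range (N + 1), c k * ∫ x in closedBall (0 : E) R,
        ((v k) • ContinuousLinearMap.id ℝ E + fderiv ℝ w x).det ∂μ
        = (c k * ((Polynomial.X ^ N : Polynomial ℝ)).eval (v k)) * μ.real (closedBall (0 : E) R) := by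
      intro k _
      rw [ms_key μ w hw C hC R hR' (v k) (by simp only [hv]; have : (0:ℝ) ≤ k := k.cast_nonneg; linarith)]
      simp [mul_assoc, N]
    rw [Finset.sum_congr rfl this, ← Finset.sum_mul, ← hint _ (by simp)]
    simp [hN.ne']
  · intro k _
    have h1 : Continuous fun x => c k * ((v k) • ContinuousLinearMap.id ℝ E + fderiv ℝ w x).det :=
      continuous_const.mul (ContinuousLinearMap.continuous_det.comp (by fun_prop))
    exact h1.continuousOn.integrableOn_compact (isCompact_closedBall _ _)

end MasterLemma

section Core
open MeasureTheory
open scoped Topology ContDiff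

local notation "W5" => EuclideanSpace ℝ (Fin 5)

noncomputable def msH (u : ℝ) : ℝ := Real.smoothTransition (u - 2)
noncomputable def msC (u : ℝ) : ℝ := Real.smoothTransition (1 - u)
noncomputable def msK (u : ℝ) : ℝ := msH u / √u

noncomputable def msPhi (x y : W5) : W5 :=
  (msC (‖y‖ ^ 2) ^ 2 * ‖x‖ ^ 2 + ‖y‖ ^ 2)⁻¹ •
    ((msC (‖y‖ ^ 2) ^ 2 * ‖x‖ ^ 2 - ‖y‖ ^ 2) • x + (2 * msC (‖y‖ ^ 2) * ‖x‖ ^ 2) • y)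

noncomputable def msG (x y : W5) : W5 := msK (‖x‖ ^ 2) • msPhi x y

lemma msH_contDiff : ContDiff ℝ 1 msH :=
  (Real.smoothTransition.contDiff (n := 1)).comp (contDiff_id.sub contDiff_const)
lemma msC_contDiff : ContDiff ℝ 1 msC :=
  (Real.smoothTransition.contDiff (n := 1)).comp (contDiff_const.sub contDiff_id)
lemma msH_zero {u : ℝ} (h : u ≤ 2) : msH u = 0 :=
  Real.smoothTransition.zero_of_nonpos (by linarith)
lemma msH_one {u : ℝ} (h : 3 ≤ u) : msH u = 1 :=
  Real.smoothTransition.one_of_one_le (by linarith)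
lemma msH_mono : Monotone msH := fun _ _ h => Real.smoothTransition.monotone (by linarith)

lemma msDen_pos {x y : W5} (hx : x ≠ 0) : 0 < msC (‖y‖ ^ 2) ^ 2 * ‖x‖ ^ 2 + ‖y‖ ^ 2 := by
  have hx' : 0 < ‖x‖ := norm_pos_iff.2 hx
  by_cases hy : y = 0
  · have : msC 0 = 1 := Real.smoothTransition.one_of_one_le (by simp)
    simp [hy, this, hx]
  · have : 0 < ‖y‖ := norm_pos_iff.2 hy
    positivity

lemma msPhi_zero {x : W5} (hx : x ≠ 0) : msPhi x 0 = x := by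
  have : msC 0 = 1 := Real.smoothTransition.one_of_one_le (by simp)
  have hx' : ‖x‖ ≠ 0 := norm_ne_zero_iff.2 hx
  simp [msPhi, this, smul_smul, hx']

lemma msPhi_neg {x y : W5} (h : 1 ≤ ‖y‖ ^ 2) : msPhi x y = - x := by
  have hc : msC (‖y‖ ^ 2) = 0 := Real.smoothTransition.zero_of_nonpos (by linarith)
  have : ‖y‖ ^ 2 ≠ 0 := by positivity
  simp only [msPhi, hc]
  simp only [ne_eq, OfNat.ofNat_ne_zero, not_false_eq_true, zero_pow, zero_mul, zero_add, zero_sub,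
    mul_zero, zero_smul, add_zero, smul_smul]
  rw [mul_neg, inv_mul_cancel₀ this, neg_smul, one_smul]

lemma msPhi_norm {x y : W5} (hx : x ≠ 0) (h : inner ℝ y x = 0) : ‖msPhi x y‖ = ‖x‖ := by
  have hd := msDen_pos (y := y) hx
  set c := msC (‖y‖ ^ 2) with hc
  have h1 : ‖(c ^ 2 * ‖x‖ ^ 2 - ‖y‖ ^ 2) • x + (2 * c * ‖x‖ ^ 2) • y‖ ^ 2
      = (‖x‖ * (c ^ 2 * ‖x‖ ^ 2 + ‖y‖ ^ 2)) ^ 2 := by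
    rw [norm_add_sq_real, inner_smul_left, inner_smul_right, real_inner_comm, h, norm_smul,
      norm_smul, mul_pow, mul_pow, Real.norm_eq_abs, Real.norm_eq_abs, sq_abs, sq_abs]
    ring
  have h2 := (pow_left_inj₀ (norm_nonneg _) (by positivity) two_ne_zero).1 h1
  rw [msPhi, ← hc, norm_smul, h2, Real.norm_of_nonneg (by positivity)]
  field_simp

lemma msG_small {x : W5} (y : W5) (h : ‖x‖ ^ 2 ≤ 2) : msG x y = 0 := by
  simp [msG, msK, msH_zero h]

lemma msG_neg {x y : W5} (h : 1 ≤ ‖y‖ ^ 2) : msG x y = - msG x 0 := by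
  by_cases hx : x = 0
  · rw [msG_small, msG_small] <;> simp [hx]
  · rw [msG, msPhi_neg h, msG, msPhi_zero hx, smul_neg]

lemma msG_norm {x y : W5} (hx : 3 ≤ ‖x‖ ^ 2) (h : inner ℝ y x = 0) : ‖msG x y‖ = 1 := by
  have hx0 : x ≠ 0 := by rintro rfl; simp at hx; linarith
  have : ‖x‖ ≠ 0 := norm_ne_zero_iff.2 hx0
  rw [msG, norm_smul, msPhi_norm hx0 h, msK, msH_one hx, Real.sqrt_sq (norm_nonneg _)]
  simp [this]

lemma msG_zero (x : W5) : msG x 0 = msK (‖x‖ ^ 2) • x := by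
  by_cases hx : x = 0
  · rw [msG_small] <;> simp [hx]
  · rw [msG, msPhi_zero hx]

lemma msG_contDiff : ContDiff ℝ 1 fun p : W5 × W5 => msG p.1 p.2 := by
  rw [contDiff_iff_contDiffAt]
  rintro ⟨x, y⟩
  by_cases hx : x = 0
  · have : (fun p : W5 × W5 => msG p.1 p.2) =ᶠ[𝓝 (x, y)] fun _ => 0 := by
      have hc : ContinuousAt (fun p : W5 × W5 => ‖p.1‖ ^ 2) (x, y) := by fun_prop
      have := hc.eventually_lt_const (u := 2) (by simp [hx])
      filter_upwards [this] with p hp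
      exact msG_small _ hp.le
    exact contDiffAt_const.congr_of_eventuallyEq this
  · have hx2 : ContDiffAt ℝ 1 (fun p : W5 × W5 => ‖p.1‖ ^ 2) (x, y) :=
      (contDiff_fst.norm_sq ℝ).contDiffAt
    have hy2 : ContDiffAt ℝ 1 (fun p : W5 × W5 => ‖p.2‖ ^ 2) (x, y) :=
      (contDiff_snd.norm_sq ℝ).contDiffAt
    have hcy : ContDiffAt ℝ 1 (fun p : W5 × W5 => msC (‖p.2‖ ^ 2)) (x, y) :=
      msC_contDiff.contDiffAt.comp (x, y) hy2
    have hhx : ContDiffAt ℝ 1 (fun p : W5 × W5 => msH (‖p.1‖ ^ 2)) (x, y) :=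
      msH_contDiff.contDiffAt.comp (x, y) hx2
    have hxn : ‖x‖ ^ 2 ≠ 0 := by simpa using hx
    have hs : ContDiffAt ℝ 1 (fun p : W5 × W5 => √(‖p.1‖ ^ 2)) (x, y) := hx2.sqrt hxn
    have hd := (msDen_pos (y := y) hx).ne'
    have h1 : ContDiffAt ℝ 1 (fun p : W5 × W5 =>
        (msC (‖p.2‖ ^ 2) ^ 2 * ‖p.1‖ ^ 2 + ‖p.2‖ ^ 2)⁻¹) (x, y) :=
      ContDiffAt.inv (((hcy.pow 2).mul hx2).add hy2) hd
    have h2 : ContDiffAt ℝ 1 (fun p : W5 × W5 =>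
        (msC (‖p.2‖ ^ 2) ^ 2 * ‖p.1‖ ^ 2 - ‖p.2‖ ^ 2) • p.1
          + (2 * msC (‖p.2‖ ^ 2) * ‖p.1‖ ^ 2) • p.2) (x, y) :=
      ((((hcy.pow 2).mul hx2).sub hy2).smul contDiffAt_fst).add
        (((contDiffAt_const.mul hcy).mul hx2).smul contDiffAt_snd)
    exact (hhx.div hs (by positivity)).smul (h1.smul h2)

lemma ms_det_aux (k b : ℝ) (x : W5) :
    (k • ContinuousLinearMap.id ℝ W5 + (b • innerSL ℝ x).smulRight x).det
      = k ^ 4 * (k + b * ‖x‖ ^ 2) := by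
  by_cases hk : k = 0
  · subst hk
    rw [show (0 : ℝ) • ContinuousLinearMap.id ℝ W5 + (b • innerSL ℝ x).smulRight x
      = (b • innerSL ℝ x).smulRight x by ext1 y; simp]
    rw [zero_pow four_ne_zero, zero_mul]
    by_contra hdet
    have hinj : Function.Injective (b • innerSL ℝ x : W5 →L[ℝ] ℝ) := by
      intro y z hyz
      have hi : Function.Injective ((b • innerSL ℝ x).smulRight x : W5 →L[ℝ] W5) := by
        have := (LinearMap.equivOfDetNeZero _ hdet).injective
        exact this
      apply hi
      simp only [ContinuousLinearMap.smulRight_apply, hyz]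
    have := LinearMap.finrank_le_finrank_of_injective
      (f := ((b • innerSL ℝ x : W5 →L[ℝ] ℝ) : W5 →ₗ[ℝ] ℝ)) hinj
    simp at this
  · have : ((k • ContinuousLinearMap.id ℝ W5 + (b • innerSL ℝ x).smulRight x : W5 →L[ℝ] W5)
        : W5 →ₗ[ℝ] W5) = k • LinearMap.transvection
          (((b / k) • innerSL ℝ x : W5 →L[ℝ] ℝ) : W5 →ₗ[ℝ] ℝ) x := by
      ext1 y
      simp [LinearMap.transvection.apply, smul_smul]
      field_simp
    rw [ContinuousLinearMap.det, this, LinearMap.det_smul, LinearMap.transvection.det]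
    simp
    field_simp

lemma ms_radial_det_eq {x : W5} (hx : x ≠ 0) :
    (fderiv ℝ (fun x : W5 => msG x 0) x).det
      = msK (‖x‖ ^ 2) ^ 4 * (2 * ‖x‖ * deriv msH (‖x‖ ^ 2)) := by
  have hxp : 0 < ‖x‖ := norm_pos_iff.2 hx
  set u := ‖x‖ ^ 2 with hu
  have hup : 0 < u := by positivity
  have hsu : √u = ‖x‖ := by rw [hu, Real.sqrt_sq hxp.le]
  have hH : HasDerivAt msH (deriv msH u) u :=
    (msH_contDiff.differentiable one_ne_zero u).hasDerivAt
  have hK : HasDerivAt msK _ u := hH.div (Real.hasDerivAt_sqrt hup.ne') (by positivity)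
  have hsq : HasFDerivAt (fun x : W5 => ‖x‖ ^ 2) (2 • innerSL ℝ x) x :=
    (hasStrictFDerivAt_norm_sq x).hasFDerivAt
  have hk := HasDerivAt.comp_hasFDerivAt (h₂ := msK) x hK hsq
  have hG := hk.smul (hasFDerivAt_id x)
  have hG' : fderiv ℝ (fun x : W5 => msG x 0) x = msK u • ContinuousLinearMap.id ℝ W5
      + ((2 * ((deriv msH u * √u - msH u * (1 / (2 * √u))) / √u ^ 2)) • innerSL ℝ x).smulRight x := by
    rw [show (fun x : W5 => msG x 0) = fun x : W5 => msK (‖x‖ ^ 2) • x from funext msG_zero]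
    refine Eq.trans (HasFDerivAt.fderiv hG) ?_
    ext1 y
    simp [mul_comm, mul_left_comm, ← hu]
    rw [mul_assoc]
  rw [hG', ms_det_aux]
  congr 1
  rw [← hu, hsu, msK, hsu]
  have : u = ‖x‖ ^ 2 := hu
  field_simp
  rw [this]
  ring

/-- The determinant of the derivative of the radial map. -/
lemma ms_radial_det (x : W5) :
    0 ≤ (fderiv ℝ (fun x : W5 => msG x 0) x).det := by
  by_cases hx : ‖x‖ ^ 2 ≤ 1
  · have : (fun x : W5 => msG x 0) =ᶠ[𝓝 x] fun _ => 0 := by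
      have hc : ContinuousAt (fun p : W5 => ‖p‖ ^ 2) x := by fun_prop
      filter_upwards [hc.eventually_lt_const (u := 2) (by linarith)] with p hp
      exact msG_small _ hp.le
    rw [this.fderiv_eq]
    simp [ContinuousLinearMap.det]
  · have hx0 : x ≠ 0 := by rintro rfl; simp at hx
    rw [ms_radial_det_eq hx0]
    have : 0 ≤ deriv msH (‖x‖ ^ 2) := msH_mono.deriv_nonneg
    positivity

lemma ms_radial_det_pos : ∃ x : W5, 1 < ‖x‖ ^ 2 ∧ ‖x‖ ^ 2 < 4 ∧
    (fderiv ℝ (fun x : W5 => msG x 0) x).det ≠ 0 := by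
  obtain ⟨u, hu, hd⟩ := exists_deriv_eq_slope msH (show (2 : ℝ) < 3 by norm_num)
    msH_contDiff.continuous.continuousOn
    (msH_contDiff.differentiable one_ne_zero).differentiableOn
  rw [msH_one le_rfl, msH_zero le_rfl] at hd
  have h2 : 2 < u := hu.1
  have h3 : u < 3 := hu.2
  refine ⟨EuclideanSpace.single 0 (√u), ?_⟩
  have hn : ‖(EuclideanSpace.single 0 (√u) : W5)‖ = √u := by
    simp [Real.norm_of_nonneg (Real.sqrt_nonneg u)]
  have hn2 : ‖(EuclideanSpace.single 0 (√u) : W5)‖ ^ 2 = u := by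
    rw [hn, Real.sq_sqrt (by linarith)]
  have hsu : 0 < √u := Real.sqrt_pos.2 (by linarith)
  refine ⟨by linarith, by linarith, ?_⟩
  rw [ms_radial_det_eq (by rw [← norm_pos_iff, hn]; exact hsu), hn2, hn, hd]
  have : 0 < msK u := div_pos (Real.smoothTransition.pos_of_pos (by linarith)) hsu
  norm_num
  exact ⟨this.ne', hsu.ne'⟩

lemma msG_comp_contDiff {V : Type*} [NormedAddCommGroup V] [NormedSpace ℝ V] {f g : V → W5}
    (hf : ContDiff ℝ 1 f) (hg : ContDiff ℝ 1 g) : ContDiff ℝ 1 fun x => msG (f x) (g x) :=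
  ContDiff.comp (g := fun p : W5 × W5 => msG p.1 p.2) (f := fun x => (f x, g x)) msG_contDiff
    (hf.prodMk hg)

attribute [irreducible] msG

noncomputable def msChi {m : ℕ} (x : Fin m → W5) : ℝ :=
  ∏ i, Real.smoothTransition (12 - ‖x i‖ ^ 2)

lemma msChi_contDiff {m : ℕ} : ContDiff ℝ 1 (msChi (m := m)) := by
  unfold msChi
  apply contDiff_prod
  intro i _
  exact (Real.smoothTransition.contDiff (n := 1)).comp
    (contDiff_const.sub ((contDiff_apply ℝ W5 i).norm_sq ℝ))

lemma msChi_one {m : ℕ} {x : Fin m → W5} (h : ∀ i, ‖x i‖ ^ 2 < 11) : msChi x = 1 :=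
  Finset.prod_eq_one fun i _ => Real.smoothTransition.one_of_one_le (by linarith [h i])

lemma msChi_zero {m : ℕ} {x : Fin m → W5} (i : Fin m) (h : 12 ≤ ‖x i‖ ^ 2) : msChi x = 0 :=
  Finset.prod_eq_zero (Finset.mem_univ i) (Real.smoothTransition.zero_of_nonpos (by linarith))

noncomputable def msW {m : ℕ} (Y : (Fin m → W5) → (Fin m → W5)) (S : Finset (Fin m))
    (x : Fin m → W5) : Fin m → W5 :=
  fun j => msChi x • msG (x j) (if j ∈ S then Y x j else 0)

lemma msW_contDiff {m : ℕ} {Y : (Fin m → W5) → (Fin m → W5)} (hY : ContDiff ℝ 1 Y)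
    (S : Finset (Fin m)) : ContDiff ℝ 1 (msW Y S) := by
  rw [contDiff_pi]
  intro j
  refine msChi_contDiff.smul ?_
  have h2 : ContDiff ℝ 1 fun x : Fin m → W5 => if j ∈ S then Y x j else 0 := by
    split_ifs
    · exact (contDiff_pi.1 hY) j
    · exact contDiff_const
  exact msG_comp_contDiff (contDiff_apply ℝ W5 j) h2

lemma msW_support {m : ℕ} (Y : (Fin m → W5) → (Fin m → W5)) (S : Finset (Fin m)) :
    HasCompactSupport (msW Y S) := by
  refine HasCompactSupport.intro (isCompact_closedBall (0 : Fin m → W5) 4) fun x hx => ?_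
  have : ∃ i, 12 ≤ ‖x i‖ ^ 2 := by
    by_contra hcon
    push Not at hcon
    apply hx
    rw [mem_closedBall_zero_iff, pi_norm_le_iff_of_nonneg (by norm_num)]
    intro i
    have := hcon i
    nlinarith [norm_nonneg (x i)]
  obtain ⟨i, hi⟩ := this
  funext j
  simp [msW, msChi_zero i hi]

lemma ms_det_zero_of_not_surj {V : Type*} [NormedAddCommGroup V] [NormedSpace ℝ V]
    [FiniteDimensional ℝ V] (A : V →L[ℝ] V) (h : ¬ Function.Surjective A) : A.det = 0 := by
  by_contra hd
  exact h (LinearMap.equivOfDetNeZero _ hd).surjective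

lemma ms_det_zero_of_comp_zero {m : ℕ} {w : (Fin m → W5) → (Fin m → W5)} (i : Fin m)
    (x : Fin m → W5) (hw : DifferentiableAt ℝ w x)
    (h : ∀ᶠ y in 𝓝 x, w y i = 0) : (fderiv ℝ w x).det = 0 := by
  apply ms_det_zero_of_not_surj
  intro hs
  have h1 : HasFDerivAt (fun y => w y i)
      ((ContinuousLinearMap.proj i : (Fin m → W5) →L[ℝ] W5).comp (fderiv ℝ w x)) x :=
    (hasFDerivAt_pi'.1 hw.hasFDerivAt) i
  have h2 : HasFDerivAt (fun y => w y i) (0 : (Fin m → W5) →L[ℝ] W5) x :=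
    (hasFDerivAt_const (0 : W5) x).congr_of_eventuallyEq h
  have h3 := h1.unique h2
  obtain ⟨v, hv⟩ := hs (fun _ => EuclideanSpace.single 0 1)
  have h4 := congrArg (fun L => L v) h3
  have h5 : (fderiv ℝ w x) v i = 0 := h4
  rw [hv] at h5
  have := congrArg norm h5
  simp at this

lemma ms_det_zero_of_comp_norm {m : ℕ} {w : (Fin m → W5) → (Fin m → W5)} (i : Fin m)
    (x : Fin m → W5) (hw : DifferentiableAt ℝ w x)
    (h : ∀ᶠ y in 𝓝 x, ‖w y i‖ = 1) : (fderiv ℝ w x).det = 0 := by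
  apply ms_det_zero_of_not_surj
  intro hs
  have h1 : HasFDerivAt (fun y => w y i)
      ((ContinuousLinearMap.proj i : (Fin m → W5) →L[ℝ] W5).comp (fderiv ℝ w x)) x :=
    (hasFDerivAt_pi'.1 hw.hasFDerivAt) i
  have h1' := h1.norm_sq
  have h2 : HasFDerivAt (fun y => ‖w y i‖ ^ 2) (0 : (Fin m → W5) →L[ℝ] ℝ) x :=
    (hasFDerivAt_const (1 : ℝ) x).congr_of_eventuallyEq (h.mono fun y hy => by simp [hy])
  have h3 := h1'.unique h2
  obtain ⟨v, hv⟩ := hs (fun _ => w x i)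
  have h4 := congrArg (fun L => L v) h3
  simp [hv, h.self_of_nhds] at h4

lemma ms_det_neg {m : ℕ} {w w' : (Fin m → W5) → (Fin m → W5)} (i : Fin m)
    (x : Fin m → W5) (hw : DifferentiableAt ℝ w x)
    (h : ∀ᶠ y in 𝓝 x, w' y i = - w y i) (h' : ∀ᶠ y in 𝓝 x, ∀ j, j ≠ i → w' y j = w y j) :
    (fderiv ℝ w' x).det = - (fderiv ℝ w x).det := by
  let f : Fin m → (W5 →L[ℝ] W5) := fun j =>
    if j = i then - ContinuousLinearMap.id ℝ W5 else ContinuousLinearMap.id ℝ W5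
  let T : (Fin m → W5) →L[ℝ] (Fin m → W5) :=
    ContinuousLinearMap.pi (fun j ↦ (f j).comp (ContinuousLinearMap.proj j))
  have hT : w' =ᶠ[𝓝 x] fun y => T (w y) := by
    filter_upwards [h, h'] with y h1 h2
    funext j
    by_cases hj : j = i
    · subst hj; simp [T, f, h1]
    · simp [T, f, hj, h2 j hj]
  have hd : HasFDerivAt (fun y => T (w y)) (T.comp (fderiv ℝ w x)) x :=
    T.hasFDerivAt.comp x hw.hasFDerivAt
  rw [hT.fderiv_eq, hd.fderiv]
  have hTd : T.det = -1 := by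
    rw [ContinuousLinearMap.det_pi, Finset.prod_eq_single i]
    · have h2 : ((- ContinuousLinearMap.id ℝ W5 : W5 →L[ℝ] W5) : W5 →ₗ[ℝ] W5)
        = (-1 : ℝ) • LinearMap.id := by ext1 y; simp
      simp only [f, if_true]
      rw [ContinuousLinearMap.det, h2, LinearMap.det_smul]
      simp
      norm_num
    · intro j _ hj
      simp [f, hj, ContinuousLinearMap.det]
    · simp
  have : (T.comp (fderiv ℝ w x)).det = T.det * (fderiv ℝ w x).det := by
    simp only [ContinuousLinearMap.det]
    exact LinearMap.det_comp _ _
  rw [this, hTd]; ring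

set_option maxHeartbeats 800000 in
theorem ms_core (m : ℕ) (hm : 1 ≤ m) (Y : (Fin m → W5) → (Fin m → W5)) (hY : ContDiff ℝ 1 Y)
    (hperp : ∀ x j, inner ℝ (Y x j) (x j) = 0)
    (hout : ∀ x i, 9 < ‖x i‖ ^ 2 → Y x = 0)
    (hbig : ∀ x, (∀ i, 1 < ‖x i‖ ^ 2 ∧ ‖x i‖ ^ 2 < 4) → ∃ i, 1 < ‖Y x i‖ ^ 2) : False := by
  have : Nonempty (Fin m) := ⟨⟨0, hm⟩⟩
  have hdiff : ∀ S x, DifferentiableAt ℝ (msW Y S) x := fun S x =>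
    (msW_contDiff hY S).differentiable one_ne_zero x
  have hci : ∀ i : Fin m, Continuous fun y : Fin m → W5 => ‖y i‖ ^ 2 := fun i => by fun_prop
  set a : Finset (Fin m) → (Fin m → W5) → ℝ := fun S x => (fderiv ℝ (msW Y S) x).det with ha
  have hN : 0 < finrank ℝ (Fin m → W5) := by
    simp [Module.finrank_pi_fintype]; omega
  have haint : ∀ S, ∫ x, a S x = 0 := fun S =>
    ms_integral_det_eq_zero volume hN _ (msW_contDiff hY S) (msW_support Y S)
  have hacont : ∀ S, Continuous (a S) := fun S =>
    ContinuousLinearMap.continuous_det.comp ((msW_contDiff hY S).continuous_fderiv one_ne_zero)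
  have hasupp : ∀ S, HasCompactSupport (a S) := by
    intro S
    refine HasCompactSupport.intro (msW_support Y S) fun x hx => ?_
    have : Nontrivial (Fin m → W5) := Module.finrank_pos_iff.1 hN
    have h0 : fderiv ℝ (msW Y S) x = 0 :=
      image_eq_zero_of_notMem_tsupport fun h => hx (tsupport_fderiv_subset ℝ h)
    simp [ha, h0, ContinuousLinearMap.det]
  -- outside `Q`
  have hOut : ∀ x : Fin m → W5, (¬ ∀ i, 1 < ‖x i‖ ^ 2 ∧ ‖x i‖ ^ 2 < 4) → ∀ S, a S x = a ∅ x := by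
    intro x hx S
    by_cases h10 : ∃ i, 10 ≤ ‖x i‖ ^ 2
    · obtain ⟨i, hi⟩ := h10
      have : msW Y S =ᶠ[𝓝 x] msW Y ∅ := by
        filter_upwards [(hci i).continuousAt.eventually_const_lt (u := 9) (by linarith)] with y hy
        funext j
        simp [msW, hout y i hy]
      simp only [ha, this.fderiv_eq]
    · push Not at h10 hx
      obtain ⟨i, hi⟩ := hx
      have h11 : ∀ᶠ y in 𝓝 x, ∀ i : Fin m, ‖y i‖ ^ 2 < 11 := by
        rw [Filter.eventually_all]
        intro i
        exact (hci i).continuousAt.eventually_lt_const (by linarith [h10 i])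
      have key : ∀ S', a S' x = 0 := by
        intro S'
        by_cases h1 : 1 < ‖x i‖ ^ 2
        · apply ms_det_zero_of_comp_norm i x (hdiff S' x)
          filter_upwards [h11, (hci i).continuousAt.eventually_const_lt (u := 3)
            (by linarith [hi h1])] with y hy1 hy2
          simp only [msW, msChi_one hy1, one_smul]
          apply msG_norm hy2.le
          split_ifs
          · exact hperp y i
          · simp
        · apply ms_det_zero_of_comp_zero i x (hdiff S' x)
          filter_upwards [(hci i).continuousAt.eventually_lt_const (u := 2)
            (by linarith)] with y hy
          simp [msW, msG_small _ hy.le]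
      rw [key, key]
  -- inside `Q`
  have hIn : ∀ x : Fin m → W5, (∀ i, 1 < ‖x i‖ ^ 2 ∧ ‖x i‖ ^ 2 < 4) → ∑ S, a S x = 0 := by
    intro x hx
    obtain ⟨i, hi⟩ := hbig x hx
    have hcY : Continuous fun y => ‖Y y i‖ ^ 2 := by
      have := (contDiff_pi.1 hY i).continuous
      fun_prop
    have hev := hcY.continuousAt.eventually_const_lt hi
    have hins : ∀ S, i ∉ S → a (insert i S) x = - a S x := by
      intro S hS
      apply ms_det_neg i x (hdiff S x)
      · filter_upwards [hev] with y hy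
        simp [msW, hS, msG_neg hy.le]
      · refine Filter.Eventually.of_forall fun y j hj => ?_
        simp [msW, hj]
    refine Finset.sum_involution (fun S _ => if i ∈ S then S.erase i else insert i S) ?_ ?_ ?_ ?_
    · intro S _
      split_ifs with h
      · have := hins (S.erase i) (Finset.notMem_erase i S)
        rw [Finset.insert_erase h] at this
        rw [this]; ring
      · rw [hins S h]; ring
    · intro S _ _
      split_ifs with h
      · intro h'; rw [← h'] at h; simp at h
      · intro h'; apply h; rw [← h']; simp
    · simp
    · intro S _
      by_cases h : i ∈ S
      · simp [h]
      · simp [h]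
  have hprod : ∀ x : Fin m → W5, (∀ i, 1 < ‖x i‖ ^ 2 ∧ ‖x i‖ ^ 2 < 4) →
      a ∅ x = ∏ i, (fderiv ℝ (fun x : W5 => msG x 0) (x i)).det := by
    intro x hx
    rw [← ContinuousLinearMap.det_pi]
    simp only [ha]
    have hG : ∀ z : W5, HasFDerivAt (fun x : W5 => msG x 0) (fderiv ℝ (fun x : W5 => msG x 0) z) z := by
      intro z
      have : ContDiff ℝ 1 (fun x : W5 => msG x 0) :=
        msG_comp_contDiff contDiff_id contDiff_const
      exact (this.differentiable one_ne_zero z).hasFDerivAt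
    have h11 : ∀ᶠ y in 𝓝 x, ∀ i : Fin m, ‖y i‖ ^ 2 < 11 := by
      rw [Filter.eventually_all]
      intro i
      exact (hci i).continuousAt.eventually_lt_const (by linarith [hx i])
    have he : msW Y ∅ =ᶠ[𝓝 x] fun y j => msG (y j) 0 := by
      filter_upwards [h11] with y hy
      funext j
      simp [msW, msChi_one hy]
    rw [he.fderiv_eq]
    congr 1
    apply HasFDerivAt.fderiv
    rw [hasFDerivAt_pi']
    intro j
    have h1 : HasFDerivAt (fun y : Fin m → W5 => y j)
        (ContinuousLinearMap.proj j : (Fin m → W5) →L[ℝ] W5) x :=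
      (ContinuousLinearMap.proj j : (Fin m → W5) →L[ℝ] W5).hasFDerivAt
    exact (hG (x j)).comp x h1
  set b : (Fin m → W5) → ℝ := fun x => ∑ S, (a ∅ x - a S x) with hb
  have hb_in : ∀ x : Fin m → W5, (∀ i, 1 < ‖x i‖ ^ 2 ∧ ‖x i‖ ^ 2 < 4) →
      b x = (2 : ℝ) ^ m * ∏ i, (fderiv ℝ (fun x : W5 => msG x 0) (x i)).det := by
    intro x hx
    simp only [hb, Finset.sum_sub_distrib, hIn x hx, ← hprod x hx]
    simp
  have hb_out : ∀ x : Fin m → W5, (¬ ∀ i, 1 < ‖x i‖ ^ 2 ∧ ‖x i‖ ^ 2 < 4) → b x = 0 := by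
    intro x hx
    exact Finset.sum_eq_zero fun S _ => by rw [hOut x hx S, sub_self]
  have hb_nonneg : 0 ≤ b := by
    intro x
    by_cases hx : ∀ i, 1 < ‖x i‖ ^ 2 ∧ ‖x i‖ ^ 2 < 4
    · rw [hb_in x hx]
      exact mul_nonneg (by positivity) (Finset.prod_nonneg fun i _ => ms_radial_det _)
    · rw [hb_out x hx]; rfl
  have hb_cont : Continuous b :=
    continuous_finsetSum _ fun S _ => (hacont ∅).sub (hacont S)
  have hb_supp : HasCompactSupport b := by
    refine HasCompactSupport.intro (isCompact_closedBall (0 : Fin m → W5) 2) fun x hx => ?_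
    apply hb_out
    intro h
    apply hx
    rw [mem_closedBall_zero_iff, pi_norm_le_iff_of_nonneg (by norm_num)]
    intro i
    nlinarith [norm_nonneg (x i), h i]
  obtain ⟨z, hz1, hz4, hz⟩ := ms_radial_det_pos
  have hbz : b (fun _ => z) ≠ 0 := by
    rw [hb_in _ fun _ => ⟨hz1, hz4⟩]
    simp [hz]
  have hpos := hb_cont.integral_pos_of_hasCompactSupport_nonneg_nonzero (μ := volume)
    hb_supp hb_nonneg hbz
  have hi : ∀ S, Integrable (a S) := fun S => (hacont S).integrable_of_hasCompactSupport (hasupp S)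
  have : ∫ x, b x = 0 := by
    simp only [hb]
    rw [integral_finsetSum (f := fun S x => a ∅ x - a S x) _ fun S _ => (hi ∅).sub (hi S)]
    refine Finset.sum_eq_zero fun S _ => ?_
    rw [integral_sub (hi ∅) (hi S), haint, haint, sub_zero]
  exact hpos.ne' this

end Core

section Mfd

open scoped Topology ContDiff

local notation "W5" => EuclideanSpace ℝ (Fin 5)

/-- The four-sphere. -/
abbrev MsS4 := sphere (0 : EuclideanSpace ℝ (Fin 5)) 1

/-- The three-sphere. -/
abbrev MsS3 := sphere (0 : EuclideanSpace ℝ (Fin 4)) 1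

open Classical in
/-- Normalisation of a vector, as a map to the sphere (junk at the origin). -/
noncomputable def msNrm (x : EuclideanSpace ℝ (Fin 5)) : MsS4 :=
  if h : x ≠ 0 then ⟨‖x‖⁻¹ • x, by
    rw [mem_sphere_zero_iff_norm, norm_smul, norm_inv, norm_norm,
      inv_mul_cancel₀ (norm_ne_zero_iff.2 h)]⟩
  else ⟨EuclideanSpace.single 0 1, by simp⟩

theorem msNrm_coe {x : W5} (h : x ≠ 0) : (msNrm x : W5) = ‖x‖⁻¹ • x := by
  simp [msNrm, h]

theorem msNrm_smul {c : ℝ} (hc : 0 < c) (x : W5) : msNrm (c • x) = msNrm x := by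
  by_cases h : x = 0
  · simp [h]
  · apply Subtype.ext
    rw [msNrm_coe h, msNrm_coe (smul_ne_zero hc.ne' h), norm_smul, smul_smul,
      Real.norm_of_nonneg hc.le]
    congr 1
    field_simp

theorem msNrm_sphere (p : MsS4) : msNrm (p : W5) = p := by
  have hp : ‖(p : W5)‖ = 1 := by simp
  have h : (p : W5) ≠ 0 := by
    intro h
    simp [h] at hp
  apply Subtype.ext
  rw [msNrm_coe h, hp]; simp

theorem msNrm_contMDiffAt {x0 : W5} (h0 : x0 ≠ 0) :
    ContMDiffAt 𝓘(ℝ, W5) (𝓡 4) ∞ msNrm x0 := by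
  have hpos : 0 < ‖x0‖ := norm_pos_iff.2 h0
  let χ : ContDiffBump x0 := ⟨‖x0‖ / 4, ‖x0‖ / 2, by positivity, by linarith⟩
  let q : W5 → W5 := fun x => x0 + χ x • (x - x0)
  have hq : ContDiff ℝ ∞ q :=
    contDiff_const.add (χ.contDiff.smul (contDiff_id.sub contDiff_const))
  have hq0 : ∀ x, q x ≠ 0 := by
    intro x hx
    have h1 : x0 = - (χ x • (x - x0)) := eq_neg_of_add_eq_zero_left hx
    have h2 : ‖x0‖ = χ x * ‖x - x0‖ := by
      conv_lhs => rw [h1]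
      rw [norm_neg, norm_smul, Real.norm_of_nonneg χ.nonneg]
    by_cases hd : ‖x0‖ / 2 ≤ dist x x0
    · rw [χ.zero_of_le_dist hd] at h2
      linarith
    · rw [dist_eq_norm] at hd
      have : χ x * ‖x - x0‖ ≤ 1 * ‖x - x0‖ :=
        mul_le_mul_of_nonneg_right χ.le_one (norm_nonneg _)
      linarith
  have hn : ContDiff ℝ ∞ fun x => ‖q x‖⁻¹ • q x :=
    ((hq.norm ℝ hq0).inv fun x => norm_ne_zero_iff.2 (hq0 x)).smul hq
  have hs : ∀ x, ‖q x‖⁻¹ • q x ∈ sphere (0 : W5) 1 := by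
    intro x
    rw [mem_sphere_zero_iff_norm, norm_smul, norm_inv, norm_norm,
      inv_mul_cancel₀ (norm_ne_zero_iff.2 (hq0 x))]
  have key := (ContMDiff.codRestrict_sphere (n := 4) hn.contMDiff hs) x0
  refine key.congr_of_eventuallyEq ?_
  have hne : ∀ᶠ x in 𝓝 x0, x ≠ 0 := isOpen_ne.mem_nhds h0
  filter_upwards [χ.eventuallyEq_one, hne] with x hx hx0
  apply Subtype.ext
  have : q x = x := by simp [q, hx]
  rw [msNrm_coe hx0, Set.val_codRestrict_apply, this]

/-- A map from a vector space to a product of spheres is smooth when its components are. -/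
theorem ms_pi_contMDiffAt {m : ℕ} {E : Type*} [NormedAddCommGroup E] [NormedSpace ℝ E]
    {g : E → (∀ _ : Fin m, MsS4)} {x : E}
    (h : ∀ i, ContMDiffAt 𝓘(ℝ, E) (𝓡 4) ∞ (fun y => g y i) x) :
    ContMDiffAt 𝓘(ℝ, E) (ModelWithCorners.pi fun _ : Fin m => 𝓡 4) ∞ g x := by
  rw [contMDiffAt_iff]
  refine ⟨continuousAt_pi.2 fun i => (h i).continuousAt, ?_⟩
  refine contDiffWithinAt_pi.2 fun i => ?_
  exact (contMDiffAt_iff.1 (h i)).2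

/-- Coordinate projections of a product of spheres are smooth. -/
theorem ms_proj_contMDiffAt {m : ℕ} (i : Fin m) (p : ∀ _ : Fin m, MsS4) :
    ContMDiffAt (ModelWithCorners.pi fun _ : Fin m => 𝓡 4) (𝓡 4) ∞
      (fun q : (∀ _ : Fin m, MsS4) => q i) p := by
  rw [contMDiffAt_iff]
  refine ⟨(continuous_apply i).continuousAt, ?_⟩
  have hlin : ContDiffWithinAt ℝ ∞ (fun z : Fin m → EuclideanSpace ℝ (Fin 4) => z i)
      (Set.range (ModelWithCorners.pi fun _ : Fin m => 𝓡 4))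
      (extChartAt (ModelWithCorners.pi fun _ : Fin m => 𝓡 4) p p) :=
    (contDiff_apply ℝ _ i).contDiffWithinAt
  refine hlin.congr_of_eventuallyEq_of_mem ?_ (Set.mem_range_self _)
  filter_upwards [extChartAt_target_mem_nhdsWithin p] with z hz
  have := (extChartAt (ModelWithCorners.pi fun _ : Fin m => 𝓡 4) p).right_inv hz
  exact congrFun this i


/-- Coordinatewise normalisation. -/
noncomputable def msqG {m : ℕ} (x : Fin m → EuclideanSpace ℝ (Fin 5)) : ∀ _ : Fin m, MsS4 :=
  fun i => msNrm (x i)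

theorem msqG_contMDiffAt {m : ℕ} {x : Fin m → W5} (hx : ∀ i, x i ≠ 0) :
    ContMDiffAt 𝓘(ℝ, Fin m → W5) (ModelWithCorners.pi fun _ : Fin m => 𝓡 4) ∞ msqG x := by
  refine ms_pi_contMDiffAt fun i => ?_
  have h1 : ContMDiffAt 𝓘(ℝ, Fin m → W5) 𝓘(ℝ, W5) ∞ (fun y : Fin m → W5 => y i) x :=
    (contDiff_apply ℝ W5 i).contMDiff x
  exact (msNrm_contMDiffAt (hx i)).comp x h1

theorem msqG_surj {m : ℕ} {x : Fin m → W5} (hx : ∀ i, x i ≠ 0) :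
    Function.Surjective
      (mfderiv 𝓘(ℝ, Fin m → W5) (ModelWithCorners.pi fun _ : Fin m => 𝓡 4) msqG x) := by
  let ι : (∀ _ : Fin m, MsS4) → (Fin m → W5) := fun p i => ‖x i‖ • (p i : W5)
  have hι : ContMDiffAt (ModelWithCorners.pi fun _ : Fin m => 𝓡 4) 𝓘(ℝ, Fin m → W5) ∞ ι
      (msqG x) := by
    refine contMDiffAt_pi_space.2 fun i => ?_
    have h1 : ContMDiffAt (ModelWithCorners.pi fun _ : Fin m => 𝓡 4) 𝓘(ℝ, W5) ∞
        (fun p : (∀ _ : Fin m, MsS4) => (p i : W5)) (msqG x) :=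
      (contMDiff_coe_sphere (n := 4) (msqG x i)).comp (msqG x) (ms_proj_contMDiffAt i (msqG x))
    have h2 : ContMDiff 𝓘(ℝ, W5) 𝓘(ℝ, W5) ∞ (fun y : W5 => ‖x i‖ • y) :=
      (contDiff_id.const_smul ‖x i‖).contMDiff
    exact (h2 _).comp (msqG x) h1
  have hιx : ι (msqG x) = x := by
    funext i
    simp only [ι, msqG, msNrm_coe (hx i), smul_smul,
      mul_inv_cancel₀ (norm_ne_zero_iff.2 (hx i)), one_smul]
  have hid : msqG ∘ ι = id := by
    funext p i
    simp only [Function.comp, ι, msqG, msNrm_smul (norm_pos_iff.2 (hx i)), msNrm_sphere, id]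
  have hg : MDifferentiableAt 𝓘(ℝ, Fin m → W5) (ModelWithCorners.pi fun _ : Fin m => 𝓡 4) msqG
      (ι (msqG x)) := by
    rw [hιx]
    exact (msqG_contMDiffAt hx).mdifferentiableAt (by simp)
  have hc := mfderiv_comp (msqG x) hg (hι.mdifferentiableAt (by simp))
  rw [hid, mfderiv_id] at hc
  intro v
  have := congrArg (fun L => L v) hc
  rw [hιx] at this
  exact ⟨_, this.symm⟩

/-- The lifted map. -/
noncomputable def msqF {m : ℕ} (f : (∀ _ : Fin m, MsS4) → MsS3)
    (x : Fin m → EuclideanSpace ℝ (Fin 5)) : EuclideanSpace ℝ (Fin 4) := (f (msqG x) : _)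

theorem msqF_norm {m : ℕ} (f : (∀ _ : Fin m, MsS4) → MsS3) (x : Fin m → W5) :
    ‖msqF f x‖ = 1 := by simp [msqF]

theorem msqF_contDiffAt {m : ℕ} {f : (∀ _ : Fin m, MsS4) → MsS3}
    (hf : ContMDiff (ModelWithCorners.pi fun _ : Fin m => 𝓡 4) (𝓡 3) (⊤ : ℕ∞) f)
    {x : Fin m → W5} (hx : ∀ i, x i ≠ 0) : ContDiffAt ℝ ∞ (msqF f) x := by
  rw [← contMDiffAt_iff_contDiffAt]
  exact (contMDiff_coe_sphere (n := 3) _).comp x ((hf _).comp x (msqG_contMDiffAt hx))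

theorem msqF_surj {m : ℕ} {f : (∀ _ : Fin m, MsS4) → MsS3}
    (hf : ContMDiff (ModelWithCorners.pi fun _ : Fin m => 𝓡 4) (𝓡 3) (⊤ : ℕ∞) f)
    (hs : ∀ p, Function.Surjective
      (mfderiv (ModelWithCorners.pi fun _ : Fin m => 𝓡 4) (𝓡 3) f p))
    {x : Fin m → W5} (hx : ∀ i, x i ≠ 0) (w : EuclideanSpace ℝ (Fin 4))
    (hw : inner ℝ (msqF f x) w = 0) : ∃ u, fderiv ℝ (msqF f) x u = w := by
  have hg := (msqG_contMDiffAt hx).mdifferentiableAt (by simp)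
  have hfd : MDifferentiableAt (ModelWithCorners.pi fun _ : Fin m => 𝓡 4) (𝓡 3) f (msqG x) :=
    (hf _).mdifferentiableAt (by simp)
  have hc : MDifferentiableAt (𝓡 3) 𝓘(ℝ, EuclideanSpace ℝ (Fin 4))
      ((↑) : MsS3 → EuclideanSpace ℝ (Fin 4)) (f (msqG x)) :=
    (contMDiff_coe_sphere (m := ∞) (n := 3) _).mdifferentiableAt (by simp)
  have e1 := mfderiv_comp x hfd hg
  have e2 := mfderiv_comp x (f := f ∘ msqG) (I' := 𝓡 3) hc (hfd.comp x hg)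
  have hmem : w ∈ (mvfderiv (𝓡 3) ((↑) : MsS3 → EuclideanSpace ℝ (Fin 4)) (f (msqG x))).range := by
    rw [range_mvfderiv_subtypeVal, Submodule.mem_orthogonal_singleton_iff_inner_right]
    exact hw
  obtain ⟨a, ha⟩ := hmem
  obtain ⟨b, hb⟩ := hs (msqG x) a
  obtain ⟨u, hu⟩ := msqG_surj hx b
  refine ⟨u, ?_⟩
  have e3 : mfderiv 𝓘(ℝ, Fin m → W5) 𝓘(ℝ, EuclideanSpace ℝ (Fin 4)) (msqF f) x u
      = fderiv ℝ (msqF f) x u := by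
    rw [mfderiv_eq_fderiv]; rfl
  rw [← e3]
  have e4 : mfderiv 𝓘(ℝ, Fin m → W5) 𝓘(ℝ, EuclideanSpace ℝ (Fin 4)) (msqF f) x u =
     mfderiv (𝓡 3) 𝓘(ℝ, EuclideanSpace ℝ (Fin 4))
      ((↑) : MsS3 → EuclideanSpace ℝ (Fin 4)) (f (msqG x))
      (mfderiv (ModelWithCorners.pi fun _ : Fin m => 𝓡 4) (𝓡 3) f (msqG x)
       (mfderiv 𝓘(ℝ, Fin m → W5) (ModelWithCorners.pi fun _ : Fin m => 𝓡 4) msqG x u)) := by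
    have := congrArg (fun L => L u) e2
    rw [e1] at this
    exact this
  rw [e4, hu, hb]
  exact ha

/-- Euler relation: the lifted map is radially constant in every variable. -/
theorem msqF_radial {m : ℕ} {f : (∀ _ : Fin m, MsS4) → MsS3}
    (hf : ContMDiff (ModelWithCorners.pi fun _ : Fin m => 𝓡 4) (𝓡 3) (⊤ : ℕ∞) f)
    {x : Fin m → W5} (hx : ∀ i, x i ≠ 0) (j : Fin m) :
    fderiv ℝ (msqF f) x (Pi.single j (x j)) = 0 := by
  have hd : DifferentiableAt ℝ (msqF f) x := (msqF_contDiffAt hf hx).differentiableAt (by simp)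
  have hl : HasDerivAt (fun t : ℝ => x + t • (Pi.single j (x j) : Fin m → W5))
      (Pi.single j (x j)) 0 := by
    simpa using ((hasDerivAt_id (0 : ℝ)).smul_const (Pi.single j (x j) : Fin m → W5)).const_add x
  have hd' : HasFDerivAt (msqF f) (fderiv ℝ (msqF f) x)
      (x + (0 : ℝ) • (Pi.single j (x j) : Fin m → W5)) := by simpa using hd.hasFDerivAt
  have h1 := hd'.comp_hasDerivAt (0 : ℝ) hl
  have h2 : HasDerivAt (msqF f ∘ fun t : ℝ => x + t • (Pi.single j (x j) : Fin m → W5)) 0 0 := by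
    refine (hasDerivAt_const (0 : ℝ) (msqF f x)).congr_of_eventuallyEq ?_
    filter_upwards [lt_mem_nhds (show (-1 : ℝ) < 0 by norm_num)] with t ht
    have : msqG (x + t • (Pi.single j (x j) : Fin m → W5)) = msqG x := by
      funext i
      by_cases hij : i = j
      · subst hij
        have : (x + t • (Pi.single i (x i) : Fin m → W5)) i = (1 + t) • x i := by
          simp [add_smul]
        simp only [msqG]
        rw [this, msNrm_smul (by linarith)]
      · simp [msqG, hij]
    simp [msqF, this]
  exact h1.unique h2

/-- A unit tangent field on the three-sphere. -/
noncomputable def msqJ (v : EuclideanSpace ℝ (Fin 4)) : EuclideanSpace ℝ (Fin 4) :=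
  !₂[-v 1, v 0, -v 3, v 2]

theorem msqJ_inner (v : EuclideanSpace ℝ (Fin 4)) : inner ℝ v (msqJ v) = 0 := by
  simp [msqJ, PiLp.inner_apply, Fin.sum_univ_four]
  ring

theorem msqJ_norm (v : EuclideanSpace ℝ (Fin 4)) : ‖msqJ v‖ = ‖v‖ := by
  simp [msqJ, EuclideanSpace.norm_eq, Fin.sum_univ_four]
  congr 1
  ring

theorem msqJ_contDiff : ContDiff ℝ ∞ msqJ := by
  rw [contDiff_euclidean]
  intro i
  have h : ∀ k : Fin 4, ContDiff ℝ ∞ fun v : EuclideanSpace ℝ (Fin 4) => v k := fun k =>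
    contDiff_euclidean.1 contDiff_id k
  fin_cases i
  · simpa [msqJ] using (h 1).neg
  · simpa [msqJ] using h 0
  · simpa [msqJ] using (h 3).neg
  · simpa [msqJ] using h 2

/-- The pulled back vector field. -/
noncomputable def msqV {m : ℕ} (f : (∀ _ : Fin m, MsS4) → MsS3)
    (x : Fin m → EuclideanSpace ℝ (Fin 5)) (j : Fin m) : EuclideanSpace ℝ (Fin 5) :=
  ∑ k : Fin 5, (inner ℝ (msqJ (msqF f x))
    (fderiv ℝ (msqF f) x (Pi.single j (EuclideanSpace.single k (1 : ℝ)))) : ℝ) •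
      EuclideanSpace.single k (1 : ℝ)

theorem msqV_inner {m : ℕ} (f : (∀ _ : Fin m, MsS4) → MsS3) (x : Fin m → W5) (j : Fin m) (z : W5) :
    inner ℝ (msqV f x j) z = inner ℝ (msqJ (msqF f x)) (fderiv ℝ (msqF f) x (Pi.single j z)) := by
  have hz : (Pi.single j z : Fin m → W5)
      = ∑ k : Fin 5, z k • (Pi.single j (EuclideanSpace.single k (1 : ℝ)) : Fin m → W5) := by
    have h0 : z = ∑ k : Fin 5, z k • (EuclideanSpace.single k (1 : ℝ) : W5) := by
      ext l
      simp [Pi.single_apply]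
    have h1 := congrArg (LinearMap.single ℝ (fun _ : Fin m => W5) j) h0
    simpa only [map_sum, map_smul, LinearMap.coe_single] using h1
  rw [hz, map_sum, inner_sum, msqV, sum_inner]
  refine Finset.sum_congr rfl fun k _ => ?_
  rw [map_smul, inner_smul_right, inner_smul_left, EuclideanSpace.inner_single_left]
  simp
  ring

theorem msqV_perp {m : ℕ} {f : (∀ _ : Fin m, MsS4) → MsS3}
    (hf : ContMDiff (ModelWithCorners.pi fun _ : Fin m => 𝓡 4) (𝓡 3) (⊤ : ℕ∞) f)
    {x : Fin m → W5} (hx : ∀ i, x i ≠ 0) (j : Fin m) : inner ℝ (msqV f x j) (x j) = 0 := by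
  rw [msqV_inner, msqF_radial hf hx, inner_zero_right]

theorem msqV_contDiffAt {m : ℕ} {f : (∀ _ : Fin m, MsS4) → MsS3}
    (hf : ContMDiff (ModelWithCorners.pi fun _ : Fin m => 𝓡 4) (𝓡 3) (⊤ : ℕ∞) f)
    {x : Fin m → W5} (hx : ∀ i, x i ≠ 0) (j : Fin m) :
    ContDiffAt ℝ 1 (fun y => msqV f y j) x := by
  have hF := msqF_contDiffAt hf hx
  have hJ : ContDiffAt ℝ 1 (fun y => msqJ (msqF f y)) x :=
    ((msqJ_contDiff.contDiffAt).comp x hF).of_le (by simp)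
  have hD : ContDiffAt ℝ 1 (fderiv ℝ (msqF f)) x :=
    hF.fderiv_right (by norm_cast)
  unfold msqV
  refine ContDiffAt.sum fun k _ => ?_
  exact (hJ.inner ℝ (hD.clm_apply contDiffAt_const)).smul contDiffAt_const

theorem msqV_ne {m : ℕ} {f : (∀ _ : Fin m, MsS4) → MsS3}
    (hf : ContMDiff (ModelWithCorners.pi fun _ : Fin m => 𝓡 4) (𝓡 3) (⊤ : ℕ∞) f)
    (hs : ∀ p, Function.Surjective
      (mfderiv (ModelWithCorners.pi fun _ : Fin m => 𝓡 4) (𝓡 3) f p))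
    {x : Fin m → W5} (hx : ∀ i, x i ≠ 0) : 0 < ∑ j, ‖msqV f x j‖ ^ 2 := by
  refine lt_of_le_of_ne (by positivity) fun h => ?_
  have h0 : ∀ j, msqV f x j = 0 := by
    intro j
    have := (Finset.sum_eq_zero_iff_of_nonneg (fun j _ => by positivity)).1 h.symm j
      (Finset.mem_univ j)
    simpa using this
  obtain ⟨u, hu⟩ := msqF_surj hf hs hx (msqJ (msqF f x)) (msqJ_inner _)
  have h1 : (inner ℝ (msqJ (msqF f x)) (fderiv ℝ (msqF f) x u) : ℝ) = 1 := by
    rw [hu, real_inner_self_eq_norm_sq, msqJ_norm, msqF_norm]; norm_num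
  have hsum : u = ∑ j, (Pi.single j (u j) : Fin m → W5) := (Finset.univ_sum_single u).symm
  rw [hsum, map_sum, inner_sum] at h1
  simp [← msqV_inner, h0] at h1

/-- Cutoff function. -/
noncomputable def msqK {m : ℕ} (x : Fin m → EuclideanSpace ℝ (Fin 5)) : ℝ :=
  ∏ i, (Real.smoothTransition (2 * ‖x i‖ ^ 2 - 1) * Real.smoothTransition (9 - ‖x i‖ ^ 2))

theorem msqK_contDiff {m : ℕ} : ContDiff ℝ 1 (msqK (m := m)) := by
  unfold msqK
  refine contDiff_prod fun i _ => ?_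
  have h : ContDiff ℝ 1 fun x : Fin m → W5 => ‖x i‖ ^ 2 := (contDiff_apply ℝ W5 i).norm_sq ℝ
  exact (Real.smoothTransition.contDiff.comp ((contDiff_const.mul h).sub contDiff_const)).mul
    (Real.smoothTransition.contDiff.comp (contDiff_const.sub h))

theorem msqK_zero {m : ℕ} {x : Fin m → W5} {i : Fin m} (h : ‖x i‖ ^ 2 ≤ 1 / 2 ∨ 9 < ‖x i‖ ^ 2) :
    msqK x = 0 := by
  refine Finset.prod_eq_zero (Finset.mem_univ i) ?_
  rcases h with h | h
  · rw [Real.smoothTransition.zero_of_nonpos (by linarith), zero_mul]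
  · rw [Real.smoothTransition.zero_of_nonpos (x := 9 - ‖x i‖ ^ 2) (by linarith), mul_zero]

theorem msqK_one {m : ℕ} {x : Fin m → W5} (h : ∀ i, 1 ≤ ‖x i‖ ^ 2 ∧ ‖x i‖ ^ 2 ≤ 4) :
    msqK x = 1 := by
  refine Finset.prod_eq_one fun i _ => ?_
  rw [Real.smoothTransition.one_of_one_le (by linarith [(h i).1]),
    Real.smoothTransition.one_of_one_le (by linarith [(h i).2]), mul_one]

theorem ms_main (m : ℕ) (hm : 1 ≤ m) (f : (∀ _ : Fin m, MsS4) → MsS3)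
    (hf : ContMDiff (ModelWithCorners.pi fun _ : Fin m => 𝓡 4) (𝓡 3) (⊤ : ℕ∞) f)
    (hs : ∀ p, Function.Surjective
      (mfderiv (ModelWithCorners.pi fun _ : Fin m => 𝓡 4) (𝓡 3) f p)) : False := by
  let A : Set (Fin m → W5) := {x | ∀ i, 1 ≤ ‖x i‖ ^ 2 ∧ ‖x i‖ ^ 2 ≤ 4}
  have hA0 : ∀ x ∈ A, ∀ i, x i ≠ 0 := by
    intro x hx i h
    have := (hx i).1
    rw [h] at this
    norm_num at this
  have hAc : IsCompact A := by
    refine (isCompact_closedBall (0 : Fin m → W5) 2).of_isClosed_subset ?_ ?_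
    · have : A = ⋂ i, ({x | 1 ≤ ‖x i‖ ^ 2} ∩ {x | ‖x i‖ ^ 2 ≤ 4}) := by
        ext x
        simp [A]
      rw [this]
      refine isClosed_iInter fun i => IsClosed.inter ?_ ?_
      · exact isClosed_le continuous_const (by fun_prop)
      · exact isClosed_le (by fun_prop) continuous_const
    · intro x hx
      rw [mem_closedBall_zero_iff, pi_norm_le_iff_of_nonneg (by norm_num)]
      intro i
      nlinarith [norm_nonneg (x i), (hx i).2]
  have hAn : A.Nonempty := ⟨fun _ => EuclideanSpace.single 0 1, fun i => by norm_num⟩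
  have hVc : ContinuousOn (fun x => ∑ j, ‖msqV f x j‖ ^ 2) A := by
    intro x hx
    refine ContinuousAt.continuousWithinAt ?_
    exact tendsto_finsetSum _ fun j _ =>
      ((msqV_contDiffAt hf (hA0 x hx) j).continuousAt.norm.pow 2)
  obtain ⟨x0, hx0, hmin⟩ := hAc.exists_isMinOn hAn hVc
  set ε := ∑ j, ‖msqV f x0 j‖ ^ 2 with hε
  have hεpos : 0 < ε := msqV_ne hf hs (hA0 x0 hx0)
  obtain ⟨T, hT⟩ : ∃ T : ℝ, (m : ℝ) < T ^ 2 * ε := by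
    refine ⟨Real.sqrt ((m + 1) / ε), ?_⟩
    rw [Real.sq_sqrt (by positivity), div_mul_cancel₀ _ hεpos.ne']
    linarith
  refine ms_core m hm (fun x j => (T * msqK x) • msqV f x j) ?_ ?_ ?_ ?_
  · refine contDiff_pi.2 fun j => contDiff_iff_contDiffAt.2 fun x => ?_
    by_cases hx : ∀ i, x i ≠ 0
    · exact (contDiffAt_const.mul msqK_contDiff.contDiffAt).smul (msqV_contDiffAt hf hx j)
    · push Not at hx
      obtain ⟨i, hi⟩ := hx
      refine (contDiffAt_const (c := (0 : W5))).congr_of_eventuallyEq ?_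
      have hlt : ∀ᶠ y : Fin m → W5 in 𝓝 x, ‖y i‖ ^ 2 < 1 / 2 := by
        have hc : Continuous fun y : Fin m → W5 => ‖y i‖ ^ 2 := by fun_prop
        exact hc.continuousAt.eventually_lt continuousAt_const (by rw [hi]; norm_num)
      filter_upwards [hlt] with y hy
      rw [msqK_zero (Or.inl hy.le)]
      simp
  · intro x j
    by_cases hx : ∀ i, x i ≠ 0
    · simp only [inner_smul_left, msqV_perp hf hx j, mul_zero]
    · push Not at hx
      obtain ⟨i, hi⟩ := hx
      rw [msqK_zero (i := i) (Or.inl (by rw [hi]; norm_num))]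
      simp
  · intro x i hi
    funext j
    rw [msqK_zero (Or.inr hi)]
    simp
  · intro x hx
    have hxA : x ∈ A := fun i => ⟨(hx i).1.le, (hx i).2.le⟩
    by_contra hcon
    push Not at hcon
    have h1 : ∑ i : Fin m, ‖(T * msqK x) • msqV f x i‖ ^ 2 ≤ ∑ _i : Fin m, (1 : ℝ) :=
      Finset.sum_le_sum fun i _ => hcon i
    have h2 : ∑ i : Fin m, ‖(T * msqK x) • msqV f x i‖ ^ 2 = T ^ 2 * ∑ i, ‖msqV f x i‖ ^ 2 := by
      rw [Finset.mul_sum]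
      refine Finset.sum_congr rfl fun i _ => ?_
      rw [msqK_one hxA, norm_smul, mul_one, mul_pow, Real.norm_eq_abs, sq_abs]
    have h3 : ε ≤ ∑ i, ‖msqV f x i‖ ^ 2 := hmin hxA
    have h4 : T ^ 2 * ε ≤ T ^ 2 * ∑ i, ‖msqV f x i‖ ^ 2 :=
      mul_le_mul_of_nonneg_left h3 (sq_nonneg T)
    simp only [Finset.sum_const, Finset.card_univ, Fintype.card_fin, nsmul_eq_mul, mul_one] at h1
    linarith

end Mfd

/-- **Lower bound `1 ≤ φ(S⁴ × ⋯ × S⁴, S³)`.**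
For every `m ≥ 1`, every `C^∞` map from the `m`-fold product of `4`-spheres to the `3`-sphere
has at least one critical point, i.e. a point where its differential is not surjective.
In particular `S⁴ × ⋯ × S⁴` does not fiber smoothly over `S³`. -/
theorem exists_critical_point_of_smooth_map_products_of_spheres_to_sphere
    (m : ℕ) (hm : 1 ≤ m)
    (f : (∀ _ : Fin m, sphere (0 : EuclideanSpace ℝ (Fin 5)) 1) →
      sphere (0 : EuclideanSpace ℝ (Fin 4)) 1)
    (hf : ContMDiff (ModelWithCorners.pi fun _ : Fin m => 𝓡 4) (𝓡 3) (⊤ : ℕ∞) f) :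
    ∃ x : ∀ _ : Fin m, sphere (0 : EuclideanSpace ℝ (Fin 5)) 1,
      ¬ Function.Surjective
        (mfderiv (ModelWithCorners.pi fun _ : Fin m => 𝓡 4) (𝓡 3) f x) := by
  by_contra hcon
  push Not at hcon
  exact ms_main m hm f hf hcon
end
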